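/- arXiv:2602.19434 — 3 statements merged into one kernel-verified Lean document; each statement's English description precedes it below -/
import Mathlib

section
/- There exists a universal constant C < ∞ (independent of n and d) such that for all integers n ≥ 8, d ≥ 3 and every subset A ⊆ [2^n]^d, one has Σ_{k=8}^n E[|ν_k(A)|] ≤ C·Per(A). -/
open MeasureTheory Finset

noncomputable section

/-- Points of the grid `[2^n]^d` (coordinates taken 0-based). -/
abbrev GridPt (n d : ℕ) := Fin d → Fin (2^n)

/-- Normalized counting "volume" of a subset of the grid: `Vol(A) = 2^{-nd}|A|`. -/
def Vol (n d : ℕ) (A : Finset (GridPt n d)) : ℝ := (A.card : ℝ) / 2^(n*d)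

/-- The ℓ1 metric on the grid. -/
def gdist {n d : ℕ} (u v : GridPt n d) : ℝ := ∑ i, |((u i : ℕ) : ℝ) - ((v i : ℕ) : ℝ)|

/-- Indices of the dyadic cubes in `D_k`. -/
abbrev CubeIdx (d k : ℕ) := Fin d → Fin (2^k)

/-- The dyadic cube of side-cardinality `2^(n-k)` indexed by `j ∈ {0,…,2^k-1}^d`. -/
def cube (n d k : ℕ) (j : CubeIdx d k) : Finset (GridPt n d) :=
  Finset.univ.filter (fun x => ∀ i, (x i : ℕ) / 2^(n-k) = (j i : ℕ))

/-- `p = 2^{-4d}`. -/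
def pp (d : ℕ) : ℝ := ((2:ℝ)^(4*d))⁻¹

/-- The law of each `X_Q`: takes values `±1` with probability `p/2` each
and `0` with probability `1-p`. -/
def stepMeasure (d : ℕ) : Measure ℝ :=
  (Real.toNNReal (pp d / 2)) • Measure.dirac (1:ℝ)
  + (Real.toNNReal (pp d / 2)) • Measure.dirac (-1:ℝ)
  + (Real.toNNReal (1 - pp d)) • Measure.dirac (0:ℝ)

instance (d : ℕ) : IsFiniteMeasure (stepMeasure d) := by
  unfold stepMeasure; infer_instance

/-- The joint law of the i.i.d. family `{X_Q}_{Q ∈ D_k}`; a sample point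
`ω : CubeIdx d k → ℝ` records the values `X_Q = ω Q`. -/
def prodMeasure (d k : ℕ) : Measure (CubeIdx d k → ℝ) :=
  Measure.pi fun _ => stepMeasure d

/-- `μ_k(A) = ∑_{Q ∈ D_k} p⁻¹ 2^k X_Q Vol(A ∩ Q)`, as a function of the sample point `ω`. -/
def muMeas (n d k : ℕ) (A : Finset (GridPt n d)) (ω : CubeIdx d k → ℝ) : ℝ :=
  ∑ j : CubeIdx d k, (pp d)⁻¹ * 2^k * ω j * Vol n d (A ∩ cube n d k j)

/-- `ν_k(A) = μ_k(A) - μ_k([2^n]^d)·Vol(A)`. -/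
def nuMeas (n d k : ℕ) (A : Finset (GridPt n d)) (ω : CubeIdx d k → ℝ) : ℝ :=
  muMeas n d k A ω - muMeas n d k Finset.univ ω * Vol n d A

/-- Ordered edges of the grid graph (each unordered edge `{u, u+e_i}` listed exactly once,
in the increasing direction). -/
def edgePairs (n d : ℕ) : Finset (GridPt n d × GridPt n d) :=
  Finset.univ.filter (fun e =>
    ∃ i, ((e.2 i : ℕ) = (e.1 i : ℕ) + 1) ∧ ∀ j, j ≠ i → e.2 j = e.1 j)

/-- The edge boundary `∂A` of a subset `A` of the grid. -/
def bdry (n d : ℕ) (A : Finset (GridPt n d)) : Finset (GridPt n d × GridPt n d) :=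
  (edgePairs n d).filter (fun e => (e.1 ∈ A ∧ e.2 ∉ A) ∨ (e.1 ∉ A ∧ e.2 ∈ A))

/-- The normalized perimeter `Per(A) = (1/d)·2^{-n(d-1)}·|∂A|`. -/
def Per (n d : ℕ) (A : Finset (GridPt n d)) : ℝ :=
  (1/(d:ℝ)) * ((2:ℝ)^(n*(d-1)))⁻¹ * ((bdry n d A).card : ℝ)

/-!
The value `ν_k(A)` is a linear form in the independent variables `X_Q`, with coefficients the
discrepancies `Vol(A ∩ Q) - Vol(Q) Vol(A)` scaled by `p⁻¹ 2^k`. The triangle inequality gives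
`E|ν_k(A)| ≤ 2^(k+1) V` with `V = Vol(A)`, and the variance gives
`(E|ν_k(A)|)² ≤ (2^k V)² (16 s / 2^k)^d`, where `s` is defined by `V s^d = 1`. Since `d ≥ 3`, the
first bound grows and the second decays geometrically away from the critical scale `2^k ≈ 16 s`,
so the sum over `k` is `O(V s)`. On the other hand `Per(A) ≥ V (s - 1)`: by the Loomis–Whitney
inequality the projections of `A` are large, and a line meeting `A` is either contained in `A` or
crosses its boundary.

Passing to the complement we may assume `V ≤ 1/2`. If `s ≥ 2` then `V s ≤ 2 V (s - 1)`. If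
`s ≤ 2` then all scales `k ≥ 8` lie well above the critical one, which improves the sum to
`O(V / d)`, while `s^d ≥ 2` forces `s - 1 ≥ 1 / (2 d)`.
-/

section LoomisWhitney

open scoped ENNReal

lemma sum_pow_card_le_mul_prod_sum {ι τ : Type*} {s : Finset ι} (hs : s.Nonempty) (T : Finset τ)
    {a : τ → ℝ≥0∞} {c : ℝ≥0∞} {b : ι → τ → ℝ≥0∞}
    (h : ∀ t ∈ T, a t ^ #s ≤ c * ∏ i ∈ s, b i t) :
    (∑ t ∈ T, a t) ^ #s ≤ c * ∏ i ∈ s, ∑ t ∈ T, b i t := by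
  -- Hölder's inequality on `T` with `#s` equal exponents, applied to the `#s`-th roots
  let r : ℝ := (#s : ℝ)⁻¹
  have hcard : (0 : ℝ) < #s := by exact_mod_cast hs.card_pos
  have hr : 0 ≤ r := inv_nonneg.2 hcard.le
  have holder : ∑ t ∈ T, ∏ i ∈ s, b i t ^ r ≤ ∏ i ∈ s, (∑ t ∈ T, b i t) ^ r := by
    let _ : MeasurableSpace τ := ⊤
    have := ENNReal.lintegral_prod_norm_pow_le (μ := ∑ t ∈ T, Measure.dirac t) s (f := b)
      (fun _ _ => Measurable.aemeasurable fun _ _ => trivial) (p := fun _ => r)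
      (by simp [r, hcard.ne']) (fun _ _ => hr)
    simpa only [lintegral_finsetSum_measure, lintegral_dirac] using this
  have hroot {x y : ℝ≥0∞} : x ≤ y ^ r ↔ x ^ #s ≤ y := by
    rw [ENNReal.le_rpow_inv_iff hcard, ENNReal.rpow_natCast]
  rw [← hroot, ENNReal.mul_rpow_of_nonneg _ _ hr, ← ENNReal.prod_rpow_of_nonneg hr]
  calc ∑ t ∈ T, a t ≤ ∑ t ∈ T, c ^ r * ∏ i ∈ s, b i t ^ r := by
        refine sum_le_sum fun t ht => ?_
        rw [ENNReal.prod_rpow_of_nonneg hr, ← ENNReal.mul_rpow_of_nonneg _ _ hr, hroot]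
        exact h t ht
    _ = c ^ r * ∑ t ∈ T, ∏ i ∈ s, b i t ^ r := (mul_sum ..).symm
    _ ≤ c ^ r * ∏ i ∈ s, (∑ t ∈ T, b i t) ^ r := by gcongr

variable {α : Type*} [DecidableEq α] {d : ℕ}

/-- The slice of `A` at height `t` in the zeroth coordinate, with that coordinate removed. -/
def tupleSlice (A : Finset (Fin (d + 1) → α)) (t : α) : Finset (Fin d → α) :=
  {x ∈ A | x 0 = t}.image Fin.tail

lemma card_tupleSlice (A : Finset (Fin (d + 1) → α)) (t : α) :
    #(tupleSlice A t) = #{x ∈ A | x 0 = t} := by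
  refine card_image_of_injOn fun x hx y hy hxy => ?_
  rw [← Fin.cons_self_tail x, ← Fin.cons_self_tail y, (mem_filter.1 hx).2, (mem_filter.1 hy).2, hxy]

lemma sum_card_tupleSlice {A : Finset (Fin (d + 1) → α)} {T : Finset α} (hT : ∀ x ∈ A, x 0 ∈ T) :
    ∑ t ∈ T, #(tupleSlice A t) = #A := by
  simp only [card_tupleSlice]
  exact (card_eq_sum_card_fiberwise hT).symm

lemma card_tupleSlice_le (A : Finset (Fin (d + 1) → α)) (t : α) :
    #(tupleSlice A t) ≤ #(A.image (Fin.removeNth 0)) := by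
  rw [funext (Fin.removeNth_zero (α := fun _ => α))]
  exact card_le_card (image_subset_image (filter_subset _ A))

lemma tupleSlice_image_removeNth_succ (A : Finset (Fin (d + 2) → α)) (i : Fin (d + 1)) (t : α) :
    tupleSlice (A.image i.succ.removeNth) t = (tupleSlice A t).image i.removeNth := by
  have tail_removeNth (x : Fin (d + 2) → α) :
      Fin.tail (i.succ.removeNth x) = i.removeNth (Fin.tail x) :=
    funext fun j => by simp [Fin.tail, Fin.removeNth]
  simp only [tupleSlice, filter_image, image_image, Function.comp_def, tail_removeNth,
    Fin.removeNth_apply, Fin.succ_succAbove_zero]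

lemma sum_card_image_removeNth_tupleSlice {A : Finset (Fin (d + 2) → α)} {T : Finset α}
    (hT : ∀ x ∈ A, x 0 ∈ T) (i : Fin (d + 1)) :
    ∑ t ∈ T, #((tupleSlice A t).image i.removeNth) = #(A.image i.succ.removeNth) := by
  simp only [← tupleSlice_image_removeNth_succ]
  refine sum_card_tupleSlice (forall_mem_image.2 fun x hx => ?_)
  simpa only [Fin.removeNth_apply, Fin.succ_succAbove_zero] using hT x hx

theorem loomis_whitney {A : Finset (Fin (d + 1) → α)} (hA : A.Nonempty) :
    #A ^ d ≤ ∏ i : Fin (d + 1), #(A.image i.removeNth) := by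
  induction d with
  | zero => simpa [Nat.one_le_iff_ne_zero] using hA.ne_empty
  | succ d ih =>
    -- The slices of a projection are the projections of the slices, so the bounds for the slices of
    -- `A` recombine through Hölder's inequality.
    let T : Finset α := A.image (· 0)
    have hT : ∀ x ∈ A, x 0 ∈ T := fun x hx => mem_image_of_mem _ hx
    have slice_bound : ∀ t ∈ T, #(tupleSlice A t) ^ (d + 1) ≤
        #(A.image (Fin.removeNth 0)) * ∏ i : Fin (d + 1),
          #((tupleSlice A t).image i.removeNth) := by
      intro t ht
      obtain ⟨x, hx, rfl⟩ := mem_image.1 ht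
      have slice_nonempty : (tupleSlice A (x 0)).Nonempty :=
        ⟨Fin.tail x, mem_image_of_mem _ (mem_filter.2 ⟨hx, rfl⟩)⟩
      rw [pow_succ']
      exact Nat.mul_le_mul (card_tupleSlice_le A _) (ih slice_nonempty)
    have holder := sum_pow_card_le_mul_prod_sum (s := univ (α := Fin (d + 1))) univ_nonempty T
      (a := fun t => (#(tupleSlice A t) : ℝ≥0∞)) (c := #(A.image (Fin.removeNth 0)))
      (b := fun i t => (#((tupleSlice A t).image i.removeNth) : ℝ≥0∞))
      (fun t ht => by simpa only [card_univ, Fintype.card_fin] using mod_cast slice_bound t ht)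
    rw [Fin.prod_univ_succ, ← sum_card_tupleSlice hT]
    simp only [← sum_card_image_removeNth_tupleSlice hT]
    rw [card_univ, Fintype.card_fin] at holder
    exact_mod_cast holder

end LoomisWhitney

section Probability

open ProbabilityTheory

variable {ι : Type*} [Fintype ι] {ρ : Measure ℝ} [IsProbabilityMeasure ρ]

lemma integral_abs_linearComb_pi_le (hρ : Integrable id ρ) (c : ι → ℝ) :
    ∫ ω, |∑ i, c i * ω i| ∂Measure.pi (fun _ : ι => ρ) ≤ (∫ x, |x| ∂ρ) * ∑ i, |c i| := by
  have integrable_abs (i : ι) :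
      Integrable (fun ω : ι → ℝ => |c i * ω i|) (Measure.pi fun _ => ρ) :=
    ((integrable_eval hρ).const_mul (c i)).abs
  calc ∫ ω, |∑ i, c i * ω i| ∂Measure.pi (fun _ : ι => ρ)
      ≤ ∫ ω, ∑ i, |c i * ω i| ∂Measure.pi (fun _ : ι => ρ) :=
        integral_mono_of_nonneg (.of_forall fun _ => abs_nonneg _)
          (integrable_finsetSum _ fun i _ => integrable_abs i)
          (.of_forall fun _ => abs_sum_le_sum_abs _ _)
    _ = ∑ i, |c i| * ∫ x, |x| ∂ρ := by
        rw [integral_finsetSum _ fun i _ => integrable_abs i]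
        refine sum_congr rfl fun i _ => ?_
        simp only [abs_mul, integral_const_mul]
        rw [integral_comp_eval (μ := fun _ : ι => ρ) (i := i) (f := fun x => |x|)
          (by fun_prop)]
    _ = (∫ x, |x| ∂ρ) * ∑ i, |c i| := by rw [← sum_mul, mul_comm]

lemma sq_integral_abs_le_variance {Ω : Type*} [MeasurableSpace Ω] {P : Measure Ω}
    [IsProbabilityMeasure P] {Y : Ω → ℝ} (hY : MemLp Y 2 P) (hmean : ∫ ω, Y ω ∂P = 0) :
    (∫ ω, |Y ω| ∂P) ^ 2 ≤ Var[Y; P] := by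
  have h := variance_nonneg |Y| P
  rw [variance_eq_sub hY.abs] at h
  rw [variance_of_integral_eq_zero hY.aemeasurable hmean]
  simpa only [Pi.pow_apply, Pi.abs_apply, sq_abs, sub_nonneg] using h

lemma sq_integral_abs_linearComb_pi_le (hρ : MemLp id 2 ρ) (hmean : ∫ x, x ∂ρ = 0) (c : ι → ℝ) :
    (∫ ω, |∑ i, c i * ω i| ∂Measure.pi (fun _ : ι => ρ)) ^ 2
      ≤ (∫ x, x ^ 2 ∂ρ) * ∑ i, c i ^ 2 := by
  have memLp_mul (i : ι) : MemLp (fun x => c i * x) 2 ρ := hρ.const_mul (c i)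
  have memLp_eval (i : ι) : MemLp (fun ω : ι → ℝ => c i * ω i) 2 (Measure.pi fun _ => ρ) :=
    (memLp_mul i).comp_measurePreserving (measurePreserving_eval (fun _ => ρ) i)
  have mean_eq_zero : ∫ ω, ∑ i, c i * ω i ∂Measure.pi (fun _ : ι => ρ) = 0 := by
    rw [integral_finsetSum _ fun i _ => (memLp_eval i).integrable one_le_two]
    refine sum_eq_zero fun i _ => ?_
    rw [integral_const_mul, integral_eval, hmean, mul_zero]
  have variance_eq :
      Var[fun ω : ι → ℝ => ∑ i, c i * ω i; Measure.pi fun _ => ρ]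
        = (∫ x, x ^ 2 ∂ρ) * ∑ i, c i ^ 2 := by
    have h := variance_sum_pi (μ := fun _ : ι => ρ) memLp_mul
    simp only [variance_const_mul _ (fun x : ℝ => x)] at h
    rw [← sum_mul, mul_comm,
      variance_of_integral_eq_zero aemeasurable_id' hmean] at h
    simpa only [Finset.sum_fn] using h
  rw [← variance_eq]
  exact sq_integral_abs_le_variance (memLp_finsetSum _ fun i _ => memLp_eval i) mean_eq_zero

end Probability

lemma pp_pos (d : ℕ) : 0 < pp d := by unfold pp; positivity

lemma pp_le_one (d : ℕ) : pp d ≤ 1 :=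
  inv_le_one_of_one_le₀ (one_le_pow₀ one_le_two)

instance isProbabilityMeasure_stepMeasure (d : ℕ) : IsProbabilityMeasure (stepMeasure d) := by
  constructor
  have hpos := pp_pos d
  have hle := pp_le_one d
  simp only [stepMeasure, Measure.coe_add, Pi.add_apply, Measure.smul_apply, measure_univ,
    ENNReal.smul_def, smul_eq_mul, mul_one]
  rw [← ENNReal.coe_add, ← ENNReal.coe_add, ← Real.toNNReal_add (by positivity) (by positivity),
    ← Real.toNNReal_add (by positivity) (by linarith)]
  norm_num

lemma integral_stepMeasure (d : ℕ) (f : ℝ → ℝ) :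
    ∫ x, f x ∂stepMeasure d = pp d / 2 * f 1 + pp d / 2 * f (-1) + (1 - pp d) * f 0 := by
  have hpos := pp_pos d
  have hle := pp_le_one d
  have integrable (c : NNReal) (a : ℝ) : Integrable f (c • Measure.dirac a) :=
    (integrable_dirac enorm_lt_top).smul_measure_nnreal
  unfold stepMeasure
  rw [integral_add_measure ((integrable _ _).add_measure (integrable _ _)) (integrable _ _),
    integral_add_measure (integrable _ _) (integrable _ _)]
  simp only [integral_smul_nnreal_measure, integral_dirac, NNReal.smul_def, smul_eq_mul]
  rw [Real.coe_toNNReal _ (by positivity), Real.coe_toNNReal _ (by linarith)]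

lemma memLp_id_stepMeasure (d : ℕ) (q : ENNReal) : MemLp id q (stepMeasure d) := by
  have ae_dirac (c : NNReal) {a : ℝ} (ha : |a| ≤ 1) : ∀ᵐ x ∂(c • Measure.dirac a), ‖x‖ ≤ 1 :=
    Measure.ae_smul_measure (by simpa [ae_dirac_eq] using ha) c
  refine .of_bound aestronglyMeasurable_id 1 ?_
  simp only [stepMeasure, ae_add_measure_iff]
  exact ⟨⟨ae_dirac _ (by simp), ae_dirac _ (by simp)⟩, ae_dirac _ (by simp)⟩

section Volume

variable {n d k : ℕ}

lemma vol_nonneg (A : Finset (GridPt n d)) : 0 ≤ Vol n d A := by unfold Vol; positivity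

lemma vol_mono {A B : Finset (GridPt n d)} (h : A ⊆ B) : Vol n d A ≤ Vol n d B := by
  unfold Vol
  gcongr

lemma vol_univ : Vol n d univ = 1 := by
  simp [Vol, pow_mul]

lemma vol_compl_inter (A B : Finset (GridPt n d)) :
    Vol n d (Aᶜ ∩ B) = Vol n d B - Vol n d (A ∩ B) := by
  have hcard := card_sdiff_add_card_inter B A
  rw [sdiff_eq_inter_compl, inter_comm B, inter_comm B] at hcard
  unfold Vol
  rw [← sub_div, ← hcard, Nat.cast_add, add_sub_cancel_right]

lemma vol_compl (A : Finset (GridPt n d)) : Vol n d Aᶜ = 1 - Vol n d A := by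
  simpa only [inter_univ, vol_univ] using vol_compl_inter A univ

lemma card_filter_div_eq {N a b : ℕ} (hb : 0 < b) (hN : (a + 1) * b ≤ N) :
    #{x : Fin N | (x : ℕ) / b = a} = b := by
  have hmap : ({x : Fin N | (x : ℕ) / b = a} : Finset _).map Fin.valEmbedding =
      Ico (a * b) ((a + 1) * b) := by
    ext x
    have hdiv : x / b = a ↔ x ∈ Ico (a * b) ((a + 1) * b) := by
      rw [mem_Ico, Nat.div_eq_iff hb, add_one_mul]
      omega
    simp only [mem_map, mem_filter_univ, Fin.valEmbedding_apply, ← hdiv]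
    refine ⟨fun ⟨_, hy, hyx⟩ => hyx ▸ hy, fun hx => ?_⟩
    exact ⟨⟨x, (mem_Ico.1 (hdiv.1 hx)).2.trans_le hN⟩, hx, rfl⟩
  rw [← card_map Fin.valEmbedding, hmap, Nat.card_Ico, ← Nat.sub_mul, Nat.add_sub_cancel_left,
    one_mul]

lemma card_cube (hk : k ≤ n) (j : CubeIdx d k) : #(cube n d k j) = 2 ^ ((n - k) * d) := by
  have hN (i : Fin d) : (j i + 1 : ℕ) * 2 ^ (n - k) ≤ 2 ^ n := by
    rw [← Nat.pow_sub_mul_pow 2 hk, mul_comm]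
    exact Nat.mul_le_mul_left _ (j i).isLt
  have hpi : cube n d k j =
      Fintype.piFinset fun i => {x : Fin (2 ^ n) | (x : ℕ) / 2 ^ (n - k) = j i} := by
    ext x
    simp only [cube, mem_filter_univ, Fintype.mem_piFinset]
  rw [hpi, Fintype.card_piFinset,
    prod_congr rfl fun i _ => card_filter_div_eq (Nat.two_pow_pos _) (hN i), prod_const,
    card_univ, Fintype.card_fin, ← pow_mul]

lemma vol_cube (hk : k ≤ n) (j : CubeIdx d k) :
    Vol n d (cube n d k j) = ((2 : ℝ) ^ (k * d))⁻¹ := by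
  have hexp : n * d = (n - k) * d + k * d := by rw [← add_mul, Nat.sub_add_cancel hk]
  rw [Vol, card_cube hk, hexp, pow_add]
  push_cast
  field_simp

lemma sum_vol_inter_cube (hk : k ≤ n) (A : Finset (GridPt n d)) :
    ∑ j, Vol n d (A ∩ cube n d k j) = Vol n d A := by
  have div_lt (x : Fin (2 ^ n)) : (x : ℕ) / 2 ^ (n - k) < 2 ^ k := by
    rw [Nat.div_lt_iff_lt_mul (by positivity), ← pow_add, Nat.add_sub_cancel' hk]
    exact x.isLt
  let cubeOf (x : GridPt n d) : CubeIdx d k := fun i => ⟨x i / 2 ^ (n - k), div_lt (x i)⟩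
  have fiber_eq (j : CubeIdx d k) : A ∩ cube n d k j = {x ∈ A | cubeOf x = j} := by
    ext x
    simp only [cube, cubeOf, mem_inter, mem_filter, mem_univ, true_and, funext_iff, Fin.ext_iff]
  have hcard : #A = ∑ j, #{x ∈ A | cubeOf x = j} :=
    card_eq_sum_card_fiberwise fun x _ => mem_univ (cubeOf x)
  simp only [fiber_eq, Vol]
  rw [← sum_div, hcard, Nat.cast_sum]

lemma sum_vol_cube (hk : k ≤ n) : ∑ j, Vol n d (cube n d k j) = 1 := by
  simpa only [univ_inter, vol_univ] using sum_vol_inter_cube hk (univ : Finset (GridPt n d))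

/-- The amount by which the volume of `A` inside the cube `Q` of index `j` exceeds its average
value `Vol(Q) Vol(A)`. Up to the factor `p⁻¹ 2^k`, these are the coefficients of `ν_k(A)` as a
linear form in the `X_Q`. -/
def cubeDiscrepancy (n d k : ℕ) (A : Finset (GridPt n d)) (j : CubeIdx d k) : ℝ :=
  Vol n d (A ∩ cube n d k j) - Vol n d (cube n d k j) * Vol n d A

lemma nuMeas_eq_sum (A : Finset (GridPt n d)) (ω : CubeIdx d k → ℝ) :
    nuMeas n d k A ω = ∑ j, (pp d)⁻¹ * 2 ^ k * cubeDiscrepancy n d k A j * ω j := by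
  simp only [nuMeas, muMeas, univ_inter, sum_mul, ← sum_sub_distrib, cubeDiscrepancy]
  exact sum_congr rfl fun j _ => by ring

lemma sum_abs_cubeDiscrepancy_le (hk : k ≤ n) (A : Finset (GridPt n d)) :
    ∑ j, |cubeDiscrepancy n d k A j| ≤ 2 * Vol n d A :=
  calc ∑ j, |cubeDiscrepancy n d k A j|
      ≤ ∑ j, (Vol n d (A ∩ cube n d k j) + Vol n d (cube n d k j) * Vol n d A) :=
        sum_le_sum fun j _ => (abs_sub _ _).trans_eq <| by
          rw [abs_of_nonneg (vol_nonneg _),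
            abs_of_nonneg (mul_nonneg (vol_nonneg _) (vol_nonneg _))]
    _ = 2 * Vol n d A := by
        rw [sum_add_distrib, ← sum_mul, sum_vol_inter_cube hk, sum_vol_cube hk]
        ring

lemma sum_sq_cubeDiscrepancy_le (hk : k ≤ n) (A : Finset (GridPt n d)) :
    ∑ j, cubeDiscrepancy n d k A j ^ 2 ≤ ((2 : ℝ) ^ (k * d))⁻¹ * Vol n d A := by
  let q : ℝ := ((2 : ℝ) ^ (k * d))⁻¹
  let m : ℝ := Vol n d A
  have sq_le (j : CubeIdx d k) : cubeDiscrepancy n d k A j ^ 2 ≤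
      q * (1 - 2 * m) * Vol n d (A ∩ cube n d k j) + q * m ^ 2 * Vol n d (cube n d k j) := by
    have hle := vol_mono (inter_subset_right : A ∩ cube n d k j ⊆ _)
    have hnonneg := vol_nonneg (A ∩ cube n d k j)
    simp only [cubeDiscrepancy, vol_cube hk j] at hle ⊢
    -- `v ^ 2 ≤ q * v` for `v = Vol(A ∩ Q) ∈ [0, q]`
    nlinarith
  calc ∑ j, cubeDiscrepancy n d k A j ^ 2
      ≤ q * (1 - 2 * m) * m + q * m ^ 2 := by
        refine (sum_le_sum fun j _ => sq_le j).trans_eq ?_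
        rw [sum_add_distrib, ← mul_sum, ← mul_sum, sum_vol_inter_cube hk, sum_vol_cube hk, mul_one]
    _ = q * m - q * m ^ 2 := by ring
    _ ≤ q * m := sub_le_self _ (by positivity)

lemma integral_abs_nuMeas_le (hk : k ≤ n) (A : Finset (GridPt n d)) :
    ∫ ω, |nuMeas n d k A ω| ∂prodMeasure d k ≤ 2 ^ (k + 1) * Vol n d A := by
  have hpp := pp_pos d
  have habs : ∫ x, |x| ∂stepMeasure d = pp d := by simp [integral_stepMeasure]
  simp only [nuMeas_eq_sum, prodMeasure]
  refine (integral_abs_linearComb_pi_le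
    (memLp_one_iff_integrable.1 (memLp_id_stepMeasure d 1)) _).trans ?_
  rw [habs]
  calc pp d * ∑ j, |(pp d)⁻¹ * 2 ^ k * cubeDiscrepancy n d k A j|
      = 2 ^ k * ∑ j, |cubeDiscrepancy n d k A j| := by
        simp only [abs_mul, abs_inv, abs_of_pos hpp, abs_pow, Nat.abs_ofNat, ← mul_sum]
        field_simp
    _ ≤ 2 ^ (k + 1) * Vol n d A := by
        rw [pow_succ, mul_assoc]
        gcongr
        exact sum_abs_cubeDiscrepancy_le hk A

lemma sq_integral_abs_nuMeas_le (hk : k ≤ n) (A : Finset (GridPt n d)) :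
    (∫ ω, |nuMeas n d k A ω| ∂prodMeasure d k) ^ 2
      ≤ (16 / 2 ^ k) ^ d * (2 ^ k) ^ 2 * Vol n d A := by
  have hpp := pp_pos d
  have hmean : ∫ x, x ∂stepMeasure d = 0 := by simp [integral_stepMeasure]
  have hsq : ∫ x, x ^ 2 ∂stepMeasure d = pp d := by simp [integral_stepMeasure]
  simp only [nuMeas_eq_sum, prodMeasure]
  refine (sq_integral_abs_linearComb_pi_le (memLp_id_stepMeasure d 2) hmean _).trans ?_
  rw [hsq]
  calc pp d * ∑ j, ((pp d)⁻¹ * 2 ^ k * cubeDiscrepancy n d k A j) ^ 2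
      = (pp d)⁻¹ * (2 ^ k) ^ 2 * ∑ j, cubeDiscrepancy n d k A j ^ 2 := by
        simp only [mul_pow, ← mul_sum]
        field_simp
    _ ≤ (pp d)⁻¹ * (2 ^ k) ^ 2 * (((2 : ℝ) ^ (k * d))⁻¹ * Vol n d A) := by
        gcongr
        exact sum_sq_cubeDiscrepancy_le hk A
    _ = (16 / 2 ^ k) ^ d * (2 ^ k) ^ 2 * Vol n d A := by
        rw [pp, inv_inv, div_pow, ← pow_mul 2 k d, pow_mul 2 4 d]
        norm_num
        ring

lemma nuMeas_compl (A : Finset (GridPt n d)) (ω : CubeIdx d k → ℝ) :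
    nuMeas n d k Aᶜ ω = -nuMeas n d k A ω := by
  simp only [nuMeas_eq_sum, cubeDiscrepancy, vol_compl_inter, vol_compl, ← sum_neg_distrib]
  exact sum_congr rfl fun j _ => by ring

end Volume

section Isoperimetry

variable {n d : ℕ}

/-- The lines in direction `i` contained in `A`, each given by the coordinates of its points other
than the `i`-th. -/
def fullLines {α : Type*} [Fintype α] [DecidableEq α] (i : Fin (d + 1))
    (A : Finset (Fin (d + 1) → α)) : Finset (Fin d → α) :=
  {z | ∀ t, i.insertNth t z ∈ A}

lemma card_fullLines_mul_card_le {α : Type*} [Fintype α] [DecidableEq α] (i : Fin (d + 1))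
    (A : Finset (Fin (d + 1) → α)) : #(fullLines i A) * Fintype.card α ≤ #A := by
  rw [← card_univ, ← card_product]
  refine card_le_card_of_injOn (fun p => i.insertNth p.2 p.1) ?_ ?_
  · rintro ⟨z, t⟩ hzt
    exact (mem_filter_univ _).1 (mem_product.1 hzt).1 t
  · rintro ⟨z, t⟩ - ⟨z', t'⟩ - heq
    obtain ⟨rfl, rfl⟩ := Fin.insertNth_inj.1 heq
    rfl

/-- The boundary edges of `A` in direction `i`. -/
def bdryDir (n d : ℕ) (A : Finset (GridPt n d)) (i : Fin d) :
    Finset (GridPt n d × GridPt n d) :=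
  {e ∈ bdry n d A | e.2 i ≠ e.1 i}

lemma sum_card_bdryDir_le (A : Finset (GridPt n d)) : ∑ i, #(bdryDir n d A i) ≤ #(bdry n d A) := by
  have directions_le_one : ∀ e ∈ bdry n d A, #{i | e.2 i ≠ e.1 i} ≤ 1 := by
    intro e he
    simp only [bdry, edgePairs, mem_filter, mem_univ, true_and] at he
    obtain ⟨⟨i, -, hi⟩, -⟩ := he
    have eq_dir (j : Fin d) (hj : e.2 j ≠ e.1 j) : j = i := not_imp_comm.1 (hi j) hj
    refine card_le_one.2 fun a ha b hb => ?_
    rw [eq_dir a (mem_filter.1 ha).2, eq_dir b (mem_filter.1 hb).2]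
  calc ∑ i, #(bdryDir n d A i) = ∑ e ∈ bdry n d A, #{i | e.2 i ≠ e.1 i} := by
        simp only [bdryDir, card_filter]
        exact sum_comm
    _ ≤ #(bdry n d A) := by
        rw [card_eq_sum_ones]
        exact sum_le_sum directions_le_one

lemma iff_of_forall_succ_iff {N : ℕ} {p : Fin N → Prop}
    (h : ∀ s t : Fin N, (t : ℕ) = s + 1 → (p s ↔ p t)) (a b : Fin N) : p a ↔ p b := by
  have iff_zero (m : ℕ) (hm : m < N) : p ⟨m, hm⟩ ↔ p ⟨0, hm.pos⟩ := by
    induction m with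
    | zero => rfl
    | succ m ih => exact (h ⟨m, by omega⟩ ⟨m + 1, hm⟩ rfl).symm.trans (ih _)
  exact (iff_zero a a.isLt).trans (iff_zero b b.isLt).symm

lemma insertNth_mem_bdryDir {A : Finset (GridPt n (d + 1))} {i : Fin (d + 1)} {z : GridPt n d}
    {s t : Fin (2 ^ n)} (hst : (t : ℕ) = s + 1)
    (h : ¬(i.insertNth s z ∈ A ↔ i.insertNth t z ∈ A)) :
    (i.insertNth s z, i.insertNth t z) ∈ bdryDir n (d + 1) A i := by
  simp only [bdryDir, bdry, edgePairs, mem_filter, mem_univ, true_and,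
    Fin.insertNth_apply_same]
  refine ⟨⟨⟨i, by simpa using hst, fun j hj => ?_⟩, by tauto⟩, fun heq => by simp [heq] at hst⟩
  obtain ⟨j, rfl⟩ := Fin.exists_succAbove_eq hj
  simp only [Fin.insertNth_apply_succAbove]

lemma card_image_removeNth_le (A : Finset (GridPt n (d + 1))) (i : Fin (d + 1)) :
    #(A.image i.removeNth) ≤ #(bdryDir n (d + 1) A i) + #(fullLines i A) := by
  -- A line meeting `A` either lies in `A` or crosses its boundary.
  have hsub : A.image i.removeNth ⊆
      (bdryDir n (d + 1) A i).image (fun e => i.removeNth e.1) ∪ fullLines i A := by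
    refine image_subset_iff.2 fun x hx => ?_
    by_contra hnot
    simp only [mem_union, not_or, mem_image, not_exists, not_and, fullLines, mem_filter_univ,
      not_forall] at hnot
    obtain ⟨no_edge, t, ht⟩ := hnot
    refine ht ((iff_of_forall_succ_iff (p := fun s => i.insertNth s (i.removeNth x) ∈ A)
      (fun s t hst => ?_) (x i) t).1 (by simpa using hx))
    by_contra hiff
    exact no_edge _ (insertNth_mem_bdryDir hst hiff) (Fin.removeNth_insertNth ..)
  exact (card_le_card hsub).trans <| (card_union_le _ _).trans <|
    Nat.add_le_add_right card_image_le _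

lemma per_nonneg (A : Finset (GridPt n d)) : 0 ≤ Per n d A := by unfold Per; positivity

lemma per_compl (A : Finset (GridPt n d)) : Per n d Aᶜ = Per n d A := by
  have hbdry : bdry n d Aᶜ = bdry n d A :=
    filter_congr fun e _ => by simp only [mem_compl]; tauto
  rw [Per, Per, hbdry]

lemma sum_card_image_removeNth_le (A : Finset (GridPt n (d + 1))) :
    (∑ i : Fin (d + 1), #(A.image i.removeNth) : ℝ) / ((d + 1 : ℕ) : ℝ)
      ≤ 2 ^ (n * d) * (Per n (d + 1) A + Vol n (d + 1) A) := by
  have fullLines_le (i : Fin (d + 1)) : (#(fullLines i A) : ℝ) ≤ #A / 2 ^ n := by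
    rw [le_div_iff₀ (by positivity)]
    have := card_fullLines_mul_card_le i A
    rw [Fintype.card_fin] at this
    exact_mod_cast this
  have term_le (i : Fin (d + 1)) :
      (#(A.image i.removeNth) : ℝ) ≤ #(bdryDir n (d + 1) A i) + #A / 2 ^ n :=
    calc (#(A.image i.removeNth) : ℝ) ≤ #(bdryDir n (d + 1) A i) + #(fullLines i A) := by
          exact_mod_cast card_image_removeNth_le A i
      _ ≤ #(bdryDir n (d + 1) A i) + #A / 2 ^ n := by
          gcongr
          exact fullLines_le i
  calc (∑ i : Fin (d + 1), #(A.image i.removeNth) : ℝ) / ((d + 1 : ℕ) : ℝ)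
      ≤ (#(bdry n (d + 1) A) + (d + 1 : ℕ) * (#A / 2 ^ n)) / ((d + 1 : ℕ) : ℝ) := by
        gcongr
        refine (sum_le_sum fun i _ => term_le i).trans ?_
        rw [sum_add_distrib, sum_const, card_univ, Fintype.card_fin, nsmul_eq_mul]
        gcongr
        exact_mod_cast sum_card_bdryDir_le A
    _ = 2 ^ (n * d) * (Per n (d + 1) A + Vol n (d + 1) A) := by
        rw [Per, Vol, Nat.add_sub_cancel, mul_add_one, pow_add]
        field_simp

lemma prod_le_arith_mean_pow {ι : Type*} (s : Finset ι) {z : ι → ℝ} (hz : ∀ i ∈ s, 0 ≤ z i) :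
    ∏ i ∈ s, z i ≤ ((∑ i ∈ s, z i) / #s) ^ #s := by
  rcases s.eq_empty_or_nonempty with rfl | hs
  · simp
  have hcard : (0 : ℝ) < #s := by exact_mod_cast hs.card_pos
  have h := Real.geom_mean_le_arith_mean s (fun _ => 1) z (fun _ _ => zero_le_one)
    (by simpa using hs.card_pos) hz
  simp only [Real.rpow_one, sum_const, nsmul_eq_mul, mul_one, one_mul] at h
  rwa [Real.rpow_inv_le_iff_of_pos (prod_nonneg hz) (div_nonneg (sum_nonneg hz) hcard.le) hcard,
    Real.rpow_natCast] at h

theorem vol_pow_le_per_add_vol_pow {A : Finset (GridPt n (d + 1))} (hA : A.Nonempty) :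
    Vol n (d + 1) A ^ d ≤ (Per n (d + 1) A + Vol n (d + 1) A) ^ (d + 1) := by
  set P := Per n (d + 1) A
  set V := Vol n (d + 1) A with hV
  have card_eq : (#A : ℝ) = 2 ^ (n * (d + 1)) * V := by
    rw [hV, Vol]
    field_simp
  have card_pow_le : (#A : ℝ) ^ d ≤ (2 ^ (n * d) * (P + V)) ^ (d + 1) :=
    calc (#A : ℝ) ^ d ≤ ∏ i : Fin (d + 1), (#(A.image i.removeNth) : ℝ) := by
          exact_mod_cast loomis_whitney hA
      _ ≤ ((∑ i : Fin (d + 1), #(A.image i.removeNth) : ℝ) / ((d + 1 : ℕ) : ℝ)) ^ (d + 1) := by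
          have amgm := prod_le_arith_mean_pow univ
            (z := fun i : Fin (d + 1) => (#(A.image i.removeNth) : ℝ)) fun _ _ => Nat.cast_nonneg _
          rwa [card_univ, Fintype.card_fin] at amgm
      _ ≤ (2 ^ (n * d) * (P + V)) ^ (d + 1) :=
          pow_le_pow_left₀
            (div_nonneg (sum_nonneg fun _ _ => Nat.cast_nonneg _) (Nat.cast_nonneg _))
            (sum_card_image_removeNth_le A) _
  rw [card_eq, mul_pow, mul_pow, ← pow_mul, ← pow_mul, mul_right_comm] at card_pow_le
  exact le_of_mul_le_mul_left card_pow_le (by positivity)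

lemma vol_mul_le_per_add_vol {A : Finset (GridPt n d)} {s : ℝ} (hd : d ≠ 0)
    (h : Vol n d A * s ^ d = 1) : Vol n d A * s ≤ Per n d A + Vol n d A := by
  obtain ⟨d, rfl⟩ := Nat.exists_eq_succ_of_ne_zero hd
  have hA : A.Nonempty := by
    rw [nonempty_iff_ne_empty]
    rintro rfl
    simp [Vol] at h
  refine le_of_pow_le_pow_left₀ hd (add_nonneg (per_nonneg A) (vol_nonneg A)) ?_
  calc (Vol n (d + 1) A * s) ^ (d + 1)
      = Vol n (d + 1) A ^ d * (Vol n (d + 1) A * s ^ (d + 1)) := by ring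
    _ ≤ (Per n (d + 1) A + Vol n (d + 1) A) ^ (d + 1) := by
        rw [h, mul_one]
        exact vol_pow_le_per_add_vol_pow hA

end Isoperimetry

section ScaleSums

variable {S : Finset ℕ} {K d : ℕ} {a : ℕ → ℝ} {M R : ℝ}

lemma sum_pow_sub_le {r : ℝ} (hr₀ : 0 ≤ r) (hr₁ : r < 1) (hS : ∀ k ∈ S, K ≤ k) :
    ∑ k ∈ S, r ^ (k - K) ≤ (1 - r)⁻¹ := by
  have hinj : Set.InjOn (· - K) S := fun k hk l hl h =>
    (tsub_left_inj (hS k hk) (hS l hl)).1 h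
  rw [← sum_image (f := (r ^ ·)) hinj, ← tsum_geometric_of_lt_one hr₀ hr₁]
  exact (summable_geometric_of_lt_one hr₀ hr₁).sum_le_tsum _ fun _ _ => by positivity

lemma sum_le_four_mul_of_sq_le {B : ℝ} (hB : 0 ≤ B) (hS : ∀ k ∈ S, K ≤ k)
    (h : ∀ k ∈ S, a k ^ 2 ≤ B ^ 2 * (1 / 2) ^ (k - K)) : ∑ k ∈ S, a k ≤ 4 * B := by
  have term_le : ∀ k ∈ S, a k ≤ B * (3 / 4) ^ (k - K) := fun k hk => by
    refine le_of_pow_le_pow_left₀ two_ne_zero (by positivity) ((h k hk).trans ?_)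
    rw [mul_pow, ← pow_mul, mul_comm (k - K), pow_mul]
    gcongr
    norm_num
  calc ∑ k ∈ S, a k ≤ B * ∑ k ∈ S, (3 / 4) ^ (k - K) := by
        rw [mul_sum]
        exact sum_le_sum term_le
    _ ≤ B * (1 - 3 / 4)⁻¹ := by
        gcongr
        exact sum_pow_sub_le (by norm_num) (by norm_num) hS
    _ = 4 * B := by ring

lemma sq_mul_div_pow_eq {y : ℝ} (hy : y ≠ 0) (hd : 2 ≤ d) :
    (M * y) ^ 2 * (R / y) ^ d = (M * R) ^ 2 * (R / y) ^ (d - 2) := by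
  rw [← Nat.sub_add_cancel hd, pow_add, Nat.add_sub_cancel]
  field_simp

lemma div_two_pow_le {k : ℕ} (hRK : R ≤ 2 ^ K) (hk : K ≤ k) : R / 2 ^ k ≤ (1 / 2) ^ (k - K) := by
  rw [one_div, inv_pow, div_le_iff₀ (by positivity), ← Nat.sub_add_cancel hk, pow_add,
    Nat.add_sub_cancel, inv_mul_cancel_left₀ (by positivity)]
  exact hRK

lemma sum_scales_le_of_one_le (hd : 3 ≤ d) (hM : 0 ≤ M) (hR : 1 ≤ R)
    (hlin : ∀ k ∈ S, a k ≤ M * 2 ^ (k + 1))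
    (hsq : ∀ k ∈ S, a k ^ 2 ≤ (M * 2 ^ k) ^ 2 * (R / 2 ^ k) ^ d) :
    ∑ k ∈ S, a k ≤ 8 * (M * R) := by
  obtain ⟨K, hKR, hRK⟩ := exists_nat_pow_near hR one_lt_two
  have sum_below : ∑ k ∈ S with k < K + 1, a k ≤ 4 * (M * R) := by
    have geom_le : ∑ k ∈ S with k < K + 1, (2 : ℝ) ^ k ≤ 2 ^ (K + 1) := by
      exact_mod_cast (Nat.geomSum_lt le_rfl fun k hk => (mem_filter.1 hk).2).le
    calc ∑ k ∈ S with k < K + 1, a k ≤ 2 * M * ∑ k ∈ S with k < K + 1, 2 ^ k := by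
          rw [mul_sum]
          refine sum_le_sum fun k hk => (hlin k (mem_filter.1 hk).1).trans_eq ?_
          ring
      _ ≤ 2 * M * 2 ^ (K + 1) := by gcongr
      _ ≤ 4 * (M * R) := by
          rw [pow_succ]
          nlinarith
  have sum_above : ∑ k ∈ S with ¬k < K + 1, a k ≤ 4 * (M * R) := by
    refine sum_le_four_mul_of_sq_le (K := K + 1) (by positivity)
      (fun k hk => not_lt.1 (mem_filter.1 hk).2) fun k hk => ?_
    obtain ⟨hkS, hKk⟩ := mem_filter.1 hk
    refine (hsq k hkS).trans ?_
    rw [sq_mul_div_pow_eq (by positivity) (by omega)]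
    have hle := div_two_pow_le hRK.le (not_lt.1 hKk)
    have hnonneg : 0 ≤ R / 2 ^ k := by positivity
    gcongr
    exact (pow_le_of_le_one hnonneg (hle.trans (pow_le_one₀ (by norm_num) (by norm_num)))
      (by omega)).trans hle
  rw [← sum_filter_add_sum_filter_not S (· < K + 1)]
  linarith

lemma sum_scales_le_of_le_two_pow (hd : 3 ≤ d) (hM : 0 ≤ M) (hR : 0 ≤ R) (hRK : R ≤ 2 ^ K)
    (hS : ∀ k ∈ S, K + 2 ≤ k)
    (hsq : ∀ k ∈ S, a k ^ 2 ≤ (M * 2 ^ k) ^ 2 * (R / 2 ^ k) ^ d) :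
    ∑ k ∈ S, a k ≤ 2 ^ (K + 3) * M / d := by
  -- The gap of two scales gains `(1 / 4) ^ (d - 2) ≤ (2 / d) ^ 2`.
  have half_pow_le : (1 / 2 : ℝ) ^ (d - 2) ≤ 2 / d := by
    have : (d : ℝ) ≤ 2 * 2 ^ (d - 2) := by
      rw [← pow_succ', show d - 2 + 1 = d - 1 by omega]
      exact_mod_cast (by have := Nat.lt_two_pow_self (n := d - 1); omega : d ≤ 2 ^ (d - 1))
    rw [one_div, inv_pow, inv_le_comm₀ (by positivity) (by positivity), inv_div]
    linarith
  have term_le : ∀ k ∈ S, a k ^ 2 ≤ (M * 2 ^ K * (2 / d)) ^ 2 * (1 / 2) ^ (k - (K + 2)) := by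
    intro k hk
    have ratio_le : R / 2 ^ k ≤ (1 / 2) ^ 2 * (1 / 2) ^ (k - (K + 2)) := by
      rw [← pow_add, show 2 + (k - (K + 2)) = k - K by have := hS k hk; omega]
      exact div_two_pow_le hRK (by have := hS k hk; omega)
    calc a k ^ 2 ≤ (M * R) ^ 2 * (R / 2 ^ k) ^ (d - 2) :=
          (hsq k hk).trans_eq (sq_mul_div_pow_eq (by positivity) (by omega))
      _ ≤ (M * 2 ^ K) ^ 2 * ((1 / 2) ^ 2 * (1 / 2) ^ (k - (K + 2))) ^ (d - 2) := by gcongr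
      _ = (M * 2 ^ K * (1 / 2) ^ (d - 2)) ^ 2 * ((1 / 2) ^ (k - (K + 2))) ^ (d - 2) := by
          rw [mul_pow ((1 / 2 : ℝ) ^ 2), pow_right_comm, mul_pow (M * 2 ^ K), mul_assoc]
      _ ≤ (M * 2 ^ K * (2 / d)) ^ 2 * (1 / 2) ^ (k - (K + 2)) := by
          gcongr
          exact pow_le_of_le_one (by positivity) (pow_le_one₀ (by norm_num) (by norm_num))
            (by omega)
  refine (sum_le_four_mul_of_sq_le (by positivity) hS term_le).trans_eq ?_
  ring

end ScaleSums

lemma one_div_two_mul_le_sub_one_of_two_le_pow {s : ℝ} {d : ℕ} (hs : 0 < s) (h : 2 ≤ s ^ d) :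
    1 / (2 * (d : ℝ)) ≤ s - 1 := by
  have hd : (0 : ℝ) < d := by
    rcases d.eq_zero_or_pos with rfl | hd
    · norm_num at h
    · exact_mod_cast hd
  have hlog : Real.log 2 ≤ d * Real.log s := by
    rw [← Real.log_pow]
    exact Real.log_le_log two_pos h
  rw [div_le_iff₀ (by positivity)]
  nlinarith [Real.log_two_gt_d9, Real.log_le_sub_one_of_pos hs]

section HalfVolume

variable {n d : ℕ} {A : Finset (GridPt n d)} {s : ℝ}

lemma exists_vol_mul_pow_eq_one (hd : d ≠ 0) (hA : 0 < Vol n d A) :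
    ∃ s : ℝ, 0 < s ∧ Vol n d A * s ^ d = 1 := by
  refine ⟨(Vol n d A)⁻¹ ^ (d : ℝ)⁻¹, by positivity, ?_⟩
  rw [Real.rpow_inv_natCast_pow (inv_nonneg.2 hA.le) hd, mul_inv_cancel₀ hA.ne']

lemma sq_integral_abs_nuMeas_le_of_vol_mul_pow_eq_one {k : ℕ} (hk : k ≤ n)
    (h : Vol n d A * s ^ d = 1) :
    (∫ ω, |nuMeas n d k A ω| ∂prodMeasure d k) ^ 2
      ≤ (Vol n d A * 2 ^ k) ^ 2 * (16 * s / 2 ^ k) ^ d :=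
  calc (∫ ω, |nuMeas n d k A ω| ∂prodMeasure d k) ^ 2
      ≤ (16 / 2 ^ k) ^ d * (2 ^ k) ^ 2 * Vol n d A * (Vol n d A * s ^ d) := by
        rw [h, mul_one]
        exact sq_integral_abs_nuMeas_le hk A
    _ = (Vol n d A * 2 ^ k) ^ 2 * (16 * s / 2 ^ k) ^ d := by
        rw [mul_div_right_comm, mul_pow (16 / 2 ^ k : ℝ)]
        ring

lemma sum_integral_abs_nuMeas_le_of_two_le (hd : 3 ≤ d) (h : Vol n d A * s ^ d = 1)
    (hs : 2 ≤ s) :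
    ∑ k ∈ Icc 8 n, ∫ ω, |nuMeas n d k A ω| ∂prodMeasure d k ≤ 512 * (Vol n d A * (s - 1)) :=
  calc ∑ k ∈ Icc 8 n, ∫ ω, |nuMeas n d k A ω| ∂prodMeasure d k
      ≤ 8 * (Vol n d A * (16 * s)) :=
        sum_scales_le_of_one_le hd (vol_nonneg A) (by linarith)
          (fun k hk => (integral_abs_nuMeas_le (mem_Icc.1 hk).2 A).trans_eq (mul_comm _ _))
          (fun k hk => sq_integral_abs_nuMeas_le_of_vol_mul_pow_eq_one (mem_Icc.1 hk).2 h)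
    _ ≤ 512 * (Vol n d A * (s - 1)) := by nlinarith [vol_nonneg A]

lemma sum_integral_abs_nuMeas_le_of_le_two (hd : 3 ≤ d) (hA : Vol n d A ≤ 1 / 2)
    (h : Vol n d A * s ^ d = 1) (hs₀ : 0 < s) (hs₂ : s ≤ 2) :
    ∑ k ∈ Icc 8 n, ∫ ω, |nuMeas n d k A ω| ∂prodMeasure d k ≤ 512 * (Vol n d A * (s - 1)) := by
  have hsd : 2 ≤ s ^ d := by nlinarith [pow_pos hs₀ d]
  calc ∑ k ∈ Icc 8 n, ∫ ω, |nuMeas n d k A ω| ∂prodMeasure d k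
      ≤ 2 ^ (5 + 3) * Vol n d A / d :=
        sum_scales_le_of_le_two_pow hd (vol_nonneg A) (by positivity)
          (by linarith : 16 * s ≤ 2 ^ 5) (fun k hk => by have := (mem_Icc.1 hk).1; omega)
          (fun k hk => sq_integral_abs_nuMeas_le_of_vol_mul_pow_eq_one (mem_Icc.1 hk).2 h)
    _ = 512 * (Vol n d A * (1 / (2 * (d : ℝ)))) := by ring
    _ ≤ 512 * (Vol n d A * (s - 1)) := by
        gcongr
        · exact vol_nonneg A
        · exact one_div_two_mul_le_sub_one_of_two_le_pow hs₀ hsd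

theorem sum_integral_abs_nuMeas_le_of_vol_le_half (hd : 3 ≤ d) (hA : Vol n d A ≤ 1 / 2) :
    ∑ k ∈ Icc 8 n, ∫ ω, |nuMeas n d k A ω| ∂prodMeasure d k ≤ 512 * Per n d A := by
  rcases (vol_nonneg A).eq_or_lt with hA₀ | hA₀
  · have integral_le_zero : ∀ k ∈ Icc 8 n, ∫ ω, |nuMeas n d k A ω| ∂prodMeasure d k ≤ 0 :=
      fun k hk => by simpa [← hA₀] using integral_abs_nuMeas_le (mem_Icc.1 hk).2 A
    exact (sum_nonpos integral_le_zero).trans (mul_nonneg (by norm_num) (per_nonneg A))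
  · obtain ⟨s, hs₀, h⟩ := exists_vol_mul_pow_eq_one (by omega) hA₀
    have hsum : ∑ k ∈ Icc 8 n, ∫ ω, |nuMeas n d k A ω| ∂prodMeasure d k
        ≤ 512 * (Vol n d A * (s - 1)) :=
      (le_total s 2).elim (sum_integral_abs_nuMeas_le_of_le_two hd hA h hs₀)
        (sum_integral_abs_nuMeas_le_of_two_le hd h)
    have isoperimetry : Vol n d A * s ≤ Per n d A + Vol n d A :=
      vol_mul_le_per_add_vol (by omega) h
    linarith

end HalfVolume

/-- Sobolev inequality for indicator functions: there is a universal constant `C`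
(independent of `n, d`) with `∑_{k=8}^n E[|ν_k(A)|] ≤ C·Per(A)` for every `A ⊆ [2^n]^d`. -/
theorem sobolev_indicator :
    ∃ C : ℝ, ∀ (n d : ℕ), 8 ≤ n → 3 ≤ d → ∀ A : Finset (GridPt n d),
      ∑ k ∈ Finset.Icc 8 n, ∫ ω, |nuMeas n d k A ω| ∂(prodMeasure d k)
        ≤ C * Per n d A := by
  refine ⟨512, fun n d _ hd A => ?_⟩
  rcases le_total (Vol n d A) (1 / 2) with hA | hA
  · exact sum_integral_abs_nuMeas_le_of_vol_le_half hd hA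
  · have hcompl := sum_integral_abs_nuMeas_le_of_vol_le_half hd (A := Aᶜ)
      (by rw [vol_compl]; linarith)
    simpa only [nuMeas_compl, abs_neg, per_compl] using hcompl
end
end

section
/- Let n, d be integers with n ≥ 1 and d ≥ 3, let |||·||| be a seminorm on the real vector space of functions [2^n]^d → ℝ that vanishes on constant functions, and let C ∈ [0,∞). If |||1_A||| ≤ C·‖1_A‖_{W^{1,1}} for every subset A ⊆ [2^n]^d (where 1_A is the indicator function of A), then |||f||| ≤ C·‖f‖_{W^{1,1}} for every function f : [2^n]^d → ℝ. -/
open MeasureTheory Finset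

noncomputable section

/-- The `(1,1)`-Sobolev seminorm `‖f‖_{W^{1,1}}`. -/
def W11 (n d : ℕ) (f : GridPt n d → ℝ) : ℝ :=
  (1 / ((edgePairs n d).card : ℝ)) * ∑ e ∈ edgePairs n d, 2^n * |f e.2 - f e.1|

/-!
Write `f` as a constant plus a finite sum of multiples of indicators of its superlevel sets. Each
partial sum is comonotone with the next indicator, so the variation `∑ w(u, v) |f v - f u|` is
additive along the decomposition, whereas a seminorm is only subadditive. An inequality between
the two on indicators therefore passes to `f`.
-/

theorem monovary_min_indicator_lt {V R S : Type*} [LinearOrder R] [Zero S] [Preorder S]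
    (f : V → R) (m : R) {t : S} (ht : 0 ≤ t) :
    Monovary (fun x => min (f x) m) ({x | m < f x}.indicator fun _ => t) := by
  intro x y hxy
  have hy : m < f y := by
    by_contra hy
    rw [Set.indicator_of_notMem (show y ∉ {x | m < f x} from hy)] at hxy
    exact hxy.not_ge (Set.indicator_nonneg (fun _ _ => ht) x)
  simp only [min_eq_right hy.le, min_le_right]

theorem induction_on_monovary_indicator {V R : Type*} [AddCommGroup R] [LinearOrder R]
    [IsOrderedAddMonoid R] {p : (V → R) → Prop} (const : ∀ c, p fun _ => c)
    (add_indicator : ∀ g (A : Set V) t, Monovary g (A.indicator fun _ => t) → p g →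
      p (g + A.indicator fun _ => t))
    {f : V → R} (hf : (Set.range f).Finite) : p f := by
  classical
  suffices values_mem : ∀ (s : Finset R) (f : V → R), (∀ x, f x ∈ s) → p f from
    values_mem hf.toFinset f fun x => hf.mem_toFinset.2 ⟨x, rfl⟩
  intro s
  induction s using Finset.induction_on_max with
  | empty =>
    intro f hf
    have : IsEmpty V := ⟨fun x => notMem_empty _ (hf x)⟩
    exact Subsingleton.elim (fun _ => 0) f ▸ const 0
  | insert M s hM ih =>
    intro f hf
    obtain rfl | hs := s.eq_empty_or_nonempty
    · have : f = fun _ => M := funext fun x => by simpa using hf x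
      exact this ▸ const M
    set m := s.max' hs
    have hmM : m < M := hM m (s.max'_mem hs)
    have le_m {x : V} (hx : f x ∈ s) : f x ≤ m := s.le_max' _ hx
    have truncation_mem (x : V) : min (f x) m ∈ s := by
      obtain hx | hx := mem_insert.1 (hf x)
      · rw [hx, min_eq_right hmM.le]
        exact s.max'_mem hs
      · rwa [min_eq_left (le_m hx)]
    have decomposition : f = (fun x => min (f x) m) + {x | m < f x}.indicator fun _ => M - m := by
      funext x
      obtain hx | hx := mem_insert.1 (hf x)
      · simp [hx, hmM, hmM.le]
      · simp [le_m hx]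
    rw [decomposition]
    exact add_indicator _ _ _ (monovary_min_indicator_lt f m (sub_nonneg.2 hmM.le))
      (ih _ truncation_mem)

theorem abs_add_sub_add_of_monovary {V R : Type*} [AddCommGroup R] [LinearOrder R]
    [IsOrderedAddMonoid R] {f g : V → R} (hfg : Monovary f g) (x y : V) :
    |(f + g) x - (f + g) y| = |f x - f y| + |g x - g y| := by
  rw [Pi.add_apply, Pi.add_apply, add_sub_add_comm, abs_add_eq_add_abs_iff]
  simp only [sub_nonneg, sub_nonpos]
  obtain h | h | h := lt_trichotomy (g x) (g y)
  · exact .inr ⟨hfg h, h.le⟩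
  · exact (le_total (f y) (f x)).imp (⟨·, h.ge⟩) (⟨·, h.le⟩)
  · exact .inl ⟨hfg h, h.le⟩

section WeightedVariation

variable {V : Type*}

/-- The total variation `∑ w(u, v) |f v - f u|` of `f` over a finite set `E` of ordered pairs
`(u, v)`. The weights may have any sign. -/
def weightedVariation (E : Finset (V × V)) (w : V × V → ℝ) (f : V → ℝ) : ℝ :=
  ∑ e ∈ E, w e * |f e.2 - f e.1|

variable (E : Finset (V × V)) (w : V × V → ℝ)

theorem weightedVariation_const (c : ℝ) : weightedVariation E w (fun _ => c) = 0 := by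
  simp [weightedVariation]

theorem weightedVariation_smul (t : ℝ) (f : V → ℝ) :
    weightedVariation E w (t • f) = |t| * weightedVariation E w f := by
  simp only [weightedVariation, Pi.smul_apply, smul_eq_mul, ← mul_sub, abs_mul, mul_sum,
    mul_left_comm]

theorem weightedVariation_add_of_monovary {f g : V → ℝ} (hfg : Monovary f g) :
    weightedVariation E w (f + g) = weightedVariation E w f + weightedVariation E w g := by
  simp only [weightedVariation, ← sum_add_distrib, ← mul_add, abs_add_sub_add_of_monovary hfg]

end WeightedVariation

theorem seminorm_indicator_to_general_general {V : Type*} (E : Finset (V × V)) (w : V × V → ℝ)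
    (N : Seminorm ℝ (V → ℝ)) (hconst : ∀ c : ℝ, N (fun _ => c) = 0)
    (hind : ∀ A : Set V, N (A.indicator 1) ≤ weightedVariation E w (A.indicator 1))
    {f : V → ℝ} (hf : (Set.range f).Finite) : N f ≤ weightedVariation E w f := by
  refine induction_on_monovary_indicator (p := fun f => N f ≤ weightedVariation E w f)
    (fun c => ?const) (fun g A t hgA ih => ?add_indicator) hf
  case const => rw [hconst, weightedVariation_const]
  case add_indicator =>
    have layer_eq : (A.indicator fun _ => t) = t • A.indicator (1 : V → ℝ) := by
      ext x
      by_cases hx : x ∈ A <;> simp [hx]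
    calc N (g + A.indicator fun _ => t)
        ≤ N g + N (A.indicator fun _ => t) := map_add_le_add N _ _
      _ = N g + |t| * N (A.indicator 1) := by rw [layer_eq, map_smul_eq_mul, Real.norm_eq_abs]
      _ ≤ weightedVariation E w g + |t| * weightedVariation E w (A.indicator 1) := by
        gcongr
        exact hind A
      _ = weightedVariation E w (g + A.indicator fun _ => t) := by
        rw [weightedVariation_add_of_monovary E w hgA, layer_eq, weightedVariation_smul]

theorem const_mul_W11_eq_weightedVariation (n d : ℕ) (C : ℝ) (f : GridPt n d → ℝ) :
    C * W11 n d f =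
      weightedVariation (edgePairs n d) (fun _ => C / #(edgePairs n d) * 2 ^ n) f := by
  simp only [W11, weightedVariation, div_eq_mul_inv, one_mul, mul_sum, mul_assoc]

/-- If a seminorm on functions on the grid vanishes on constants and is bounded by
`C·‖·‖_{W^{1,1}}` on indicator functions, then it is bounded by `C·‖·‖_{W^{1,1}}`
on all functions. -/
theorem seminorm_indicator_to_general (n d : ℕ) (hn : 1 ≤ n) (hd : 3 ≤ d)
    (N : Seminorm ℝ (GridPt n d → ℝ))
    (hconst : ∀ c : ℝ, N (fun _ => c) = 0)
    (C : ℝ) (hC : 0 ≤ C)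
    (hind : ∀ A : Finset (GridPt n d),
      N (fun x => if x ∈ A then (1:ℝ) else 0)
        ≤ C * W11 n d (fun x => if x ∈ A then (1:ℝ) else 0)) :
    ∀ f : GridPt n d → ℝ, N f ≤ C * W11 n d f := by
  classical
  simp only [const_mul_W11_eq_weightedVariation] at hind ⊢
  exact fun f => seminorm_indicator_to_general_general _ _ N hconst
    (fun A => by simpa only [Set.mem_toFinset] using! hind A.toFinset) (Set.toFinite (Set.range f))
end
end

section
/- For every finite metric space X with at least two points, c_1(EMD(X)) = c_1(TC(X)) = c_{1,lin}(TC(X)); that is, the infimal bi-Lipschitz distortion of embeddings of the metric space EMD(X) into L_1, the infimal bi-Lipschitz distortion of embeddings of the metric space TC(X) into L_1, and the infimal bi-Lipschitz distortion among all m ∈ ℕ and all linear maps TC(X) → ℓ_1^m, are all equal. -/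
open MeasureTheory Finset

noncomputable section

variable (X : Type*) [Fintype X] [MetricSpace X]

/-- The transportation cost norm of a signed measure of total mass 0 on a finite metric
space `X` (given by its point masses), via Kantorovich duality. -/
def tcNormX (μ : X → ℝ) : ℝ :=
  sSup {r : ℝ | ∃ f : X → ℝ,
    (∀ u v, |f u - f v| ≤ dist u v) ∧ r = |∑ x, f x * μ x|}

/-- The Lebesgue space `L_1(0,1)`. -/
abbrev L1Space : Type := Lp ℝ 1 (volume.restrict (Set.Ioo (0:ℝ) 1))

/-- The subspace `TC(X)` of signed measures of total mass 0, as a real vector space. -/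
def TCmod : Submodule ℝ (X → ℝ) where
  carrier := {μ | ∑ x, μ x = 0}
  add_mem' := by
    intro a b ha hb
    simp only [Set.mem_setOf_eq] at *
    simp [Finset.sum_add_distrib, ha, hb]
  zero_mem' := by simp
  smul_mem' := by
    intro c a ha
    simp only [Set.mem_setOf_eq] at *
    simp [← Finset.mul_sum, ha]

/-- `c_1(EMD(X))`: the infimal bi-Lipschitz distortion of an embedding of the metric space
of probability measures on `X` (with the earth mover distance) into `L_1(0,1)`. -/
def c1EMD : ℝ :=
  sInf {C : ℝ | ∃ F : {μ : X → ℝ // (∀ x, 0 ≤ μ x) ∧ ∑ x, μ x = 1} → L1Space,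
    ∀ μ ν, tcNormX X (μ.1 - ν.1) ≤ ‖F μ - F ν‖ ∧
      ‖F μ - F ν‖ ≤ C * tcNormX X (μ.1 - ν.1)}

/-- `c_1(TC(X))`: the infimal bi-Lipschitz distortion of an embedding of the metric space
`TC(X)` into `L_1(0,1)`. -/
def c1TC : ℝ :=
  sInf {C : ℝ | ∃ F : TCmod X → L1Space,
    ∀ μ ν : TCmod X, tcNormX X ((μ:X → ℝ) - (ν:X → ℝ)) ≤ ‖F μ - F ν‖ ∧
      ‖F μ - F ν‖ ≤ C * tcNormX X ((μ:X → ℝ) - (ν:X → ℝ))}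

/-- `c_{1,lin}(TC(X))`: the infimal bi-Lipschitz distortion among all `m ∈ ℕ` and all
linear maps `TC(X) → ℓ_1^m`. -/
def c1lin : ℝ :=
  sInf {C : ℝ | ∃ (m : ℕ) (F : TCmod X →ₗ[ℝ] PiLp 1 (fun _ : Fin m => ℝ)),
    ∀ μ ν : TCmod X, tcNormX X ((μ:X → ℝ) - (ν:X → ℝ)) ≤ ‖F μ - F ν‖ ∧
      ‖F μ - F ν‖ ≤ C * tcNormX X ((μ:X → ℝ) - (ν:X → ℝ))}

open Metric Topology Convolution Filter
open scoped NNReal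

/-!
After subtracting the uniform measure, the probability measures on `X` contain a neighbourhood of
`0` in the finite-dimensional normed space `V = TC(X)`. So let `F` be a map into `L₁` which on some
ball of `V` is bi-Lipschitz with constants `1` and `C`. Mollify `F` on a concentric ball of radius
`R` at the scale `κ² R`, obtaining a `C¹` map `G`, and put `p v = ⨍ y, ‖DG_y v‖` over that ball.
Then `p v ≤ C ‖v‖` since `G` is `C`-Lipschitz. Integrating `DG` along segments of length `κ R` shows
that `p v ≥ (1 - κ) ^ dim V * (1 - 2 C κ) * ‖v‖`, since at that scale `G` expands almost as much as
`F`.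

Each `v ↦ ‖DG_y v‖` is the `L₁` norm of a linear map, hence so is `p`. It is therefore a limit of
finite sums `∑ i, |φ i v|` of absolute values of linear functionals, that is, of norms of linear
maps into `ℓ₁ᵐ`. Thus the distortion `C` is attained up to `ε` by a linear map. Conversely `ℓ₁ᵐ`
embeds linearly and isometrically into `L₁(0,1)`, and `EMD(X)` embeds isometrically into `TC(X)`.
-/

section L1Cone

variable {V : Type*} [NormedAddCommGroup V] [NormedSpace ℝ V]

variable (V) in
/-- The cone of functions on `V` that finite sums `∑ i, |φ i v|` of absolute values of continuous
linear functionals approximate up to an arbitrarily small multiple of `‖v‖`. The sums are the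
seminorms `v ↦ ‖T v‖` with `T : V → ℓ₁ᵐ` linear, so this is their closure, uniformly on the unit
ball. -/
def l1Cone : PointedCone ℝ (V → ℝ) where
  carrier := {p | ∀ η : ℝ, 0 < η → ∃ (m : ℕ) (φ : Fin m → V →L[ℝ] ℝ),
    ∀ v, |p v - ∑ i, ‖φ i v‖| ≤ η * ‖v‖}
  zero_mem' η hη := ⟨0, Fin.elim0, fun v => by simpa using by positivity⟩
  add_mem' {p q} hp hq η hη := by
    obtain ⟨m, φ, hφ⟩ := hp (η / 2) (half_pos hη)
    obtain ⟨n, ψ, hψ⟩ := hq (η / 2) (half_pos hη)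
    refine ⟨m + n, Fin.append φ ψ, fun v => ?_⟩
    simp only [Pi.add_apply, Fin.sum_univ_add, Fin.append_left, Fin.append_right]
    rw [add_sub_add_comm]
    linarith [abs_add_le (p v - ∑ i, ‖φ i v‖) (q v - ∑ i, ‖ψ i v‖), hφ v, hψ v]
  smul_mem' := by
    rintro ⟨a, ha⟩ p hp η hη
    obtain ⟨m, φ, hφ⟩ := hp (η / (a + 1)) (by positivity)
    refine ⟨m, fun i => a • φ i, fun v => ?_⟩
    calc |a * p v - ∑ i, ‖a * φ i v‖| = a * |p v - ∑ i, ‖φ i v‖| := by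
          simp only [norm_mul, Real.norm_of_nonneg ha, ← mul_sum, ← mul_sub, abs_mul,
            abs_of_nonneg ha]
      _ ≤ (a + 1) * (η / (a + 1) * ‖v‖) := by gcongr; exacts [by linarith, hφ v]
      _ = η * ‖v‖ := by field_simp

lemma norm_apply_mem_l1Cone (φ : V →L[ℝ] ℝ) : (fun v => ‖φ v‖) ∈ l1Cone V :=
  fun η hη => ⟨1, fun _ => φ, fun v => by simpa using by positivity⟩

lemma mem_l1Cone_of_forall_exists_abs_sub_le {p : V → ℝ}
    (h : ∀ η : ℝ, 0 < η → ∃ q ∈ l1Cone V, ∀ v, |p v - q v| ≤ η * ‖v‖) : p ∈ l1Cone V := by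
  intro η hη
  obtain ⟨q, hq, hpq⟩ := h (η / 2) (half_pos hη)
  obtain ⟨m, φ, hφ⟩ := hq (η / 2) (half_pos hη)
  refine ⟨m, φ, fun v => (abs_sub_le _ (q v) _).trans ?_⟩
  linarith [hpq v, hφ v]

lemma exists_linearMap_of_mem_l1Cone {p : V → ℝ} (hp : p ∈ l1Cone V) {η : ℝ} (hη : 0 < η) :
    ∃ (m : ℕ) (T : V →ₗ[ℝ] PiLp 1 (fun _ : Fin m => ℝ)), ∀ v, |p v - ‖T v‖| ≤ η * ‖v‖ := by
  obtain ⟨m, φ, hφ⟩ := hp η hη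
  refine ⟨m, (WithLp.linearEquiv 1 ℝ (Fin m → ℝ)).symm.toLinearMap ∘ₗ
    LinearMap.pi fun i => (φ i).toLinearMap, fun v => ?_⟩
  simpa [PiLp.norm_eq_of_L1] using hφ v

end L1Cone

section Integrals

variable {V Z Ω : Type*} [NormedAddCommGroup V] [NormedSpace ℝ V] [NormedAddCommGroup Z]
  [NormedSpace ℝ Z] [MeasurableSpace Ω] {μ : Measure Ω}

lemma abs_integral_norm_apply_sub_le {A B : Ω → V →L[ℝ] Z} (hA : Integrable A μ)
    (hB : Integrable B μ) (v : V) :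
    |∫ ω, ‖A ω v‖ ∂μ - ∫ ω, ‖B ω v‖ ∂μ| ≤ (∫ ω, ‖A ω - B ω‖ ∂μ) * ‖v‖ := by
  have hAv : Integrable (fun ω => ‖A ω v‖) μ := (hA.apply_continuousLinearMap v).norm
  have hBv : Integrable (fun ω => ‖B ω v‖) μ := (hB.apply_continuousLinearMap v).norm
  rw [← integral_sub hAv hBv, ← integral_mul_const]
  refine abs_integral_le_integral_abs.trans <|
    integral_mono (hAv.sub hBv).abs ((hA.sub hB).norm.mul_const _) fun ω => ?_
  exact (abs_norm_sub_norm_le _ _).trans ((A ω - B ω).le_opNorm v)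

lemma integral_norm_apply_mem_l1Cone (hZ : ∀ c : V →L[ℝ] Z, (fun v => ‖c v‖) ∈ l1Cone V)
    {A : Ω → V →L[ℝ] Z} (hA : Integrable A μ) : (fun v => ∫ ω, ‖A ω v‖ ∂μ) ∈ l1Cone V := by
  refine mem_l1Cone_of_forall_exists_abs_sub_le fun η hη => ?_
  obtain ⟨S, hS, hSmem⟩ := (memLp_one_iff_integrable.2 hA).exists_simpleFunc_eLpNorm_sub_lt
    ENNReal.one_ne_top (ENNReal.ofReal_pos.2 hη).ne'
  have hSint : Integrable S μ := memLp_one_iff_integrable.1 hSmem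
  have hdist : ∫ ω, ‖A ω - S ω‖ ∂μ ≤ η := by
    rw [eLpNorm_one_eq_lintegral_enorm] at hS
    exact (integral_norm_eq_lintegral_enorm (hA.sub hSint).1).trans_le
      (ENNReal.toReal_le_of_le_ofReal hη.le hS.le)
  have hsum : (fun v => ∫ ω, ‖S ω v‖ ∂μ)
      = ∑ c ∈ S.range, μ.real (S ⁻¹' {c}) • fun v => ‖c v‖ := by
    ext v
    have hmap := SimpleFunc.map_integral (μ := μ) S (fun c => ‖c v‖) hSint (by simp)
    rw [SimpleFunc.integral_eq_integral _ (hSint.apply_continuousLinearMap v).norm] at hmap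
    simpa using hmap
  refine ⟨_, ?_, fun v => (abs_integral_norm_apply_sub_le hA hSint v).trans ?_⟩
  · rw [hsum]
    exact sum_mem fun c _ => (l1Cone V).smul_mem measureReal_nonneg (hZ c)
  · gcongr

lemma exists_integrable_apply_ae_eq [FiniteDimensional ℝ V] (c : V →L[ℝ] Lp ℝ 1 μ) :
    ∃ A : Ω → V →L[ℝ] ℝ, Integrable A μ ∧ ∀ v, c v =ᵐ[μ] fun ω => A ω v := by
  let b := Module.finBasis ℝ V
  let functional : (Fin (Module.finrank ℝ V) → ℝ) →L[ℝ] V →L[ℝ] ℝ :=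
    ((b.constr ℝ).trans LinearMap.toContinuousLinearMap).toLinearMap.toContinuousLinearMap
  refine ⟨fun ω => functional fun j => c (b j) ω, functional.integrable_comp <|
    .of_eval fun j => L1.integrable_coeFn (c (b j)), fun v => ?_⟩
  have hexpand : c v = ∑ j, b.repr v j • c (b j) := by
    conv_lhs => rw [← b.sum_repr v, map_sum]
    exact sum_congr rfl fun j _ => map_smul c _ _
  have hsmul : ∀ᵐ ω ∂μ, ∀ j, (b.repr v j • c (b j)) ω = b.repr v j * c (b j) ω :=
    ae_all_iff.2 fun j => Lp.coeFn_smul (b.repr v j) (c (b j))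
  rw [hexpand]
  filter_upwards [Lp.coeFn_fun_finsetSum univ fun j => b.repr v j • c (b j), hsmul] with ω hω hω'
  rw [hω]
  simp [functional, hω', Module.Basis.constr_apply_fintype]

lemma norm_apply_L1_mem_l1Cone [FiniteDimensional ℝ V] (c : V →L[ℝ] Lp ℝ 1 μ) :
    (fun v => ‖c v‖) ∈ l1Cone V := by
  obtain ⟨A, hA, hcA⟩ := exists_integrable_apply_ae_eq c
  convert integral_norm_apply_mem_l1Cone norm_apply_mem_l1Cone hA using 2 with v
  rw [L1.norm_eq_integral_norm]
  exact integral_congr_ae ((hcA v).fun_comp norm)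

end Integrals

section Mollification

variable {V Z : Type*} [NormedAddCommGroup V] [NormedSpace ℝ V] [FiniteDimensional ℝ V]
  [NormedAddCommGroup Z] [NormedSpace ℝ Z]

lemma lipschitzOnWith_normed_convolution [MeasurableSpace V] [BorelSpace V] {μ : Measure V}
    [μ.IsAddHaarMeasure] (φ : ContDiffBump (0 : V)) {F : V → Z} (hF : LocallyIntegrable F μ)
    {C : ℝ≥0} {s : Set V} (hL : LipschitzOnWith C F s) :
    LipschitzOnWith C (φ.normed μ ⋆[ContinuousLinearMap.lsmul ℝ ℝ, μ] F)
      {x | ball x φ.rOut ⊆ s} := by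
  refine LipschitzOnWith.of_dist_le_mul fun x hx y hy => ?_
  have hint : ∀ z, Integrable (fun t => φ.normed μ t • F (z - t)) μ :=
    φ.hasCompactSupport_normed.convolutionExists_left (ContinuousLinearMap.lsmul ℝ ℝ)
      φ.continuous_normed hF
  have hpoint : ∀ t, ‖φ.normed μ t • F (x - t) - φ.normed μ t • F (y - t)‖
      ≤ φ.normed μ t * (C * dist x y) := by
    intro t
    rw [← smul_sub, norm_smul, Real.norm_of_nonneg (φ.nonneg_normed t)]
    by_cases ht : φ.normed μ t = 0
    · simp [ht]
    have hmem : t ∈ ball (0 : V) φ.rOut := by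
      rw [← φ.support_normed_eq (μ := μ)]
      exact ht
    rw [mem_ball_zero_iff] at hmem
    gcongr
    · exact φ.nonneg_normed t
    · simpa [dist_eq_norm] using
        hL.dist_le_mul (x - t) (hx (by simpa)) (y - t) (hy (by simpa))
  rw [dist_eq_norm, convolution_def, convolution_def]
  simp only [ContinuousLinearMap.lsmul_apply]
  rw [← integral_sub (hint x) (hint y)]
  refine (norm_integral_le_of_norm_le (φ.integrable_normed.mul_const _)
    (.of_forall hpoint)).trans_eq ?_
  rw [integral_mul_const, φ.integral_normed, one_mul]

lemma exists_contDiff_dist_le_of_lipschitzOnWith [CompleteSpace Z] {F : V → Z} {C : ℝ≥0}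
    {s : Set V} (hs : IsCompact s) (hL : LipschitzOnWith C F s) {ε : ℝ} (hε : 0 < ε) :
    ∃ G : V → Z, ContDiff ℝ 1 G ∧ (∀ x, ball x ε ⊆ s → dist (G x) (F x) ≤ C * ε) ∧
      LipschitzOnWith C G {x | ball x ε ⊆ s} := by
  borelize V
  let μ : Measure V := Measure.addHaar
  let φ : ContDiffBump (0 : V) := ⟨ε / 2, ε, half_pos hε, half_lt_self hε⟩
  have hF : Integrable (s.indicator F) μ :=
    (hL.continuousOn.integrableOn_compact hs).integrable_indicator hs.measurableSet
  have hL' : LipschitzOnWith C (s.indicator F) s := fun x hx y hy => by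
    simpa only [Set.indicator_of_mem hx, Set.indicator_of_mem hy] using hL hx hy
  refine ⟨φ.normed μ ⋆[ContinuousLinearMap.lsmul ℝ ℝ, μ] s.indicator F,
    φ.hasCompactSupport_normed.contDiff_convolution_left _ φ.contDiff_normed
      hF.locallyIntegrable, fun x hx => ?_,
    lipschitzOnWith_normed_convolution φ hF.locallyIntegrable hL'⟩
  have hxs : x ∈ s := hx (mem_ball_self hε)
  rw [← Set.indicator_of_mem hxs F]
  refine φ.dist_normed_convolution_le hF.aestronglyMeasurable fun z hz => ?_
  refine (hL'.dist_le_mul z (hx hz) x hxs).trans ?_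
  gcongr
  exact (mem_ball.1 hz).le

end Mollification

section AveragedDerivative

lemma setIntegral_comp_add_right_le {E : Type*} [AddGroup E] [MeasurableSpace E]
    [MeasurableAdd E] {μ : Measure E} [μ.IsAddRightInvariant] {s t : Set E} {h : E → ℝ}
    (h0 : ∀ y, 0 ≤ h y) (hint : IntegrableOn h t μ) {w : E} (hst : ∀ x ∈ s, x + w ∈ t) :
    ∫ x in s, h (x + w) ∂μ ≤ ∫ y in t, h y ∂μ := by
  have hpres := measurePreserving_add_right μ w
  have hemb := measurableEmbedding_addRight w
  rw [← hpres.setIntegral_preimage_emb hemb h]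
  exact setIntegral_mono_set ((hpres.integrableOn_comp_preimage hemb).2 hint)
    (.of_forall fun x => h0 _) (LE.le.eventuallyLE hst)

lemma add_smul_mem_closedBall {E : Type*} [SeminormedAddCommGroup E] [NormedSpace ℝ E]
    {x₀ x w : E} {r R a : ℝ} (hx : x ∈ closedBall x₀ r) (ha : a ∈ Set.Icc (0 : ℝ) 1)
    (hw : r + ‖w‖ ≤ R) : x + a • w ∈ closedBall x₀ R := by
  rw [mem_closedBall_iff_norm] at hx ⊢
  calc ‖x + a • w - x₀‖ = ‖(x - x₀) + a • w‖ := by rw [add_sub_right_comm]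
    _ ≤ ‖x - x₀‖ + a * ‖w‖ := norm_add_le_of_le le_rfl (norm_smul_of_nonneg ha.1 w).le
    _ ≤ R := by linarith [mul_le_of_le_one_left (norm_nonneg w) ha.2]

variable {V Z : Type*} [NormedAddCommGroup V] [NormedSpace ℝ V] [NormedAddCommGroup Z]
  [NormedSpace ℝ Z] {G : V → Z}

lemma norm_sub_le_integral_norm_fderiv [CompleteSpace Z] (hG : ContDiff ℝ 1 G) (x v : V) :
    ‖G (x + v) - G x‖ ≤ ∫ a in Set.Icc (0 : ℝ) 1, ‖fderiv ℝ G (x + a • v) v‖ := by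
  have hderiv : ∀ a ∈ Set.uIcc (0 : ℝ) 1,
      HasDerivAt (fun a : ℝ => G (x + a • v)) (fderiv ℝ G (x + a • v) v) a := fun a _ =>
    (hG.differentiable one_ne_zero _).hasFDerivAt.comp_hasDerivAt a <| by
      simpa using ((hasDerivAt_id a).smul_const v).const_add x
  have hcont : Continuous fun a : ℝ => fderiv ℝ G (x + a • v) v := by fun_prop
  have hftc := intervalIntegral.integral_eq_sub_of_hasDerivAt hderiv (hcont.intervalIntegrable 0 1)
  simp only [one_smul, zero_smul, add_zero] at hftc
  rw [← hftc, intervalIntegral.integral_of_le zero_le_one, ← integral_Icc_eq_integral_Ioc]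
  exact norm_integral_le_integral_norm _

variable [MeasurableSpace V] [BorelSpace V] {μ : Measure V} [μ.IsAddHaarMeasure]

lemma setAverage_norm_fderiv_le (hG : ContDiff ℝ 1 G) {s : Set V} (hs : IsCompact s)
    (hμs : μ s ≠ 0) {C : ℝ} (hC : ∀ y ∈ s, ‖fderiv ℝ G y‖ ≤ C) (v : V) :
    ⨍ y in s, ‖fderiv ℝ G y v‖ ∂μ ≤ C * ‖v‖ := by
  have hpos : 0 < μ.real s := ENNReal.toReal_pos hμs hs.measure_ne_top
  have hle : ∫ y in s, ‖fderiv ℝ G y v‖ ∂μ ≤ ∫ _ in s, C * ‖v‖ ∂μ :=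
    setIntegral_mono_on (Continuous.continuousOn (by fun_prop) |>.integrableOn_compact hs)
      (integrableOn_const hs.measure_ne_top) hs.measurableSet fun y hy =>
        (fderiv ℝ G y).le_of_opNorm_le (hC y hy) v
  rw [setIntegral_const, smul_eq_mul] at hle
  rwa [setAverage_eq, smul_eq_mul, inv_mul_le_iff₀ hpos]

variable [FiniteDimensional ℝ V]

lemma setIntegral_norm_sub_le_setIntegral_norm_fderiv [CompleteSpace Z] (hG : ContDiff ℝ 1 G)
    {s t : Set V} (hs : IsCompact s) (ht : IsCompact t) {v : V}
    (hst : ∀ x ∈ s, ∀ a ∈ Set.Icc (0 : ℝ) 1, x + a • v ∈ t) :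
    ∫ x in s, ‖G (x + v) - G x‖ ∂μ ≤ ∫ y in t, ‖fderiv ℝ G y v‖ ∂μ := by
  let h : V → ℝ := fun y => ‖fderiv ℝ G y v‖
  have hcont : Continuous h := by fun_prop
  have hprod : Integrable (Function.uncurry fun (x : V) (a : ℝ) => h (x + a • v))
      ((μ.restrict s).prod (volume.restrict (Set.Icc 0 1))) := by
    rw [Measure.prod_restrict]
    exact Continuous.continuousOn (by fun_prop) |>.integrableOn_compact (hs.prod isCompact_Icc)
  calc ∫ x in s, ‖G (x + v) - G x‖ ∂μ
      ≤ ∫ x in s, (∫ a in Set.Icc (0 : ℝ) 1, h (x + a • v)) ∂μ :=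
        setIntegral_mono (Continuous.continuousOn (by fun_prop) |>.integrableOn_compact hs)
          hprod.integral_prod_left fun x => norm_sub_le_integral_norm_fderiv hG x v
    _ = ∫ a in Set.Icc (0 : ℝ) 1, (∫ x in s, h (x + a • v) ∂μ) := integral_integral_swap hprod
    _ ≤ ∫ _ in Set.Icc (0 : ℝ) 1, (∫ y in t, h y ∂μ) :=
        setIntegral_mono_on hprod.integral_prod_right (integrableOn_const (by simp))
          measurableSet_Icc fun a ha => setIntegral_comp_add_right_le (fun _ => norm_nonneg _)
            (hcont.continuousOn.integrableOn_compact ht) fun x hx => hst x hx a ha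
    _ = ∫ y in t, ‖fderiv ℝ G y v‖ ∂μ := by simp [h]

/-- The loss `(1 - κ) ^ dim V` is the proportion of the ball of radius `R` whose points stay in it
under translation by vectors of norm `κ * R`. -/
lemma le_setAverage_norm_fderiv [CompleteSpace Z] (hG : ContDiff ℝ 1 G) {x₀ : V} {R κ m : ℝ}
    (hR : 0 < R) (hκ : 0 < κ) (hκ' : κ ≤ 1)
    (hm : ∀ x ∈ closedBall x₀ R, ∀ y ∈ closedBall x₀ R, ‖x - y‖ = κ * R →
      m * ‖x - y‖ ≤ ‖G x - G y‖) (v : V) :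
    (1 - κ) ^ Module.finrank ℝ V * m * ‖v‖ ≤ ⨍ y in closedBall x₀ R, ‖fderiv ℝ G y v‖ ∂μ := by
  rcases eq_or_ne v 0 with rfl | hv
  · simp
  have hvpos : 0 < ‖v‖ := norm_pos_iff.2 hv
  have hball := fun {r : ℝ} (hr : 0 ≤ r) => Measure.addHaar_real_closedBall μ x₀ hr
  have hunit : 0 < μ.real (ball (0 : V) 1) :=
    ENNReal.toReal_pos (measure_ball_pos μ 0 one_pos).ne' measure_ball_lt_top.ne
  set c : ℝ := κ * R / ‖v‖ with hc
  have hcpos : 0 < c := by positivity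
  have hcv : ‖c • v‖ = κ * R := by
    rw [norm_smul, Real.norm_of_nonneg hcpos.le, div_mul_cancel₀ _ hvpos.ne']
  have hstay : ∀ x ∈ closedBall x₀ ((1 - κ) * R), ∀ a ∈ Set.Icc (0 : ℝ) 1,
      x + a • c • v ∈ closedBall x₀ R := fun x hx a ha =>
    add_smul_mem_closedBall hx ha (by rw [hcv]; linarith)
  have hlower : μ.real (closedBall x₀ ((1 - κ) * R)) * (m * (κ * R))
      ≤ ∫ x in closedBall x₀ ((1 - κ) * R), ‖G (x + c • v) - G x‖ ∂μ := by
    rw [← smul_eq_mul, ← setIntegral_const]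
    refine setIntegral_mono_on (integrableOn_const measure_closedBall_lt_top.ne)
      (Continuous.continuousOn (by fun_prop) |>.integrableOn_compact (isCompact_closedBall _ _))
      measurableSet_closedBall fun x hx => ?_
    have := hm (x + c • v) (by simpa using hstay x hx 1 (by simp)) x
      (by simpa using hstay x hx 0 (by simp)) (by simpa using hcv)
    simpa [hcv] using this
  have hscale : ∫ y in closedBall x₀ R, ‖fderiv ℝ G y (c • v)‖ ∂μ
      = c * ∫ y in closedBall x₀ R, ‖fderiv ℝ G y v‖ ∂μ := by
    simp only [map_smul, norm_smul_of_nonneg hcpos.le, integral_const_mul]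
  have hcompare := hlower.trans <| setIntegral_norm_sub_le_setIntegral_norm_fderiv hG
    (isCompact_closedBall _ _) (isCompact_closedBall _ _) hstay
  rw [hscale, hball (by nlinarith : 0 ≤ (1 - κ) * R), mul_pow] at hcompare
  rw [setAverage_eq, smul_eq_mul, hball hR.le, le_inv_mul_iff₀ (by positivity)]
  refine le_of_mul_le_mul_left (le_of_eq_of_le ?_ hcompare) hcpos
  rw [hc]
  field_simp

end AveragedDerivative

section Linearization

variable {V Z Ω : Type*} [NormedAddCommGroup V] [NormedSpace ℝ V] [FiniteDimensional ℝ V]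
  [NormedAddCommGroup Z] [NormedSpace ℝ Z]

lemma exists_mem_l1Cone_of_lipschitzOnWith_closedBall [CompleteSpace Z]
    (hZ : ∀ c : V →L[ℝ] Z, (fun v => ‖c v‖) ∈ l1Cone V) {F : V → Z} {C : ℝ≥0} {x₀ : V} {R κ : ℝ}
    (hR : 0 < R) (hκ : 0 < κ) (hκ' : κ < 1) (hL : LipschitzOnWith C F (closedBall x₀ (2 * R)))
    (hF : ∀ x ∈ closedBall x₀ R, ∀ y ∈ closedBall x₀ R, ‖x - y‖ ≤ ‖F x - F y‖) :
    ∃ p ∈ l1Cone V, ∀ v,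
      (1 - κ) ^ Module.finrank ℝ V * (1 - 2 * C * κ) * ‖v‖ ≤ p v ∧ p v ≤ C * ‖v‖ := by
  borelize V
  let μ : Measure V := Measure.addHaar
  have hscale : κ ^ 2 * R < R := mul_lt_of_lt_one_left hR (by nlinarith)
  obtain ⟨G, hG, hGF, hGL⟩ := exists_contDiff_dist_le_of_lipschitzOnWith
    (isCompact_closedBall x₀ (2 * R)) hL (by positivity : 0 < κ ^ 2 * R)
  have hnhds : ∀ x ∈ closedBall x₀ R, {y | ball y (κ ^ 2 * R) ⊆ closedBall x₀ (2 * R)} ∈ 𝓝 x := by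
    refine fun x hx => mem_of_superset (ball_mem_nhds x (sub_pos.2 hscale)) fun y hy => ?_
    refine ball_subset_closedBall.trans (closedBall_subset_closedBall' ?_)
    linarith [dist_triangle y x x₀, mem_ball.1 hy, mem_closedBall.1 hx]
  have hfderiv : ∀ y ∈ closedBall x₀ R, ‖fderiv ℝ G y‖ ≤ C := fun y hy =>
    norm_fderiv_le_of_lipschitzOn ℝ (hnhds y hy) hGL
  have hlower : ∀ x ∈ closedBall x₀ R, ∀ y ∈ closedBall x₀ R, ‖x - y‖ = κ * R →
      (1 - 2 * C * κ) * ‖x - y‖ ≤ ‖G x - G y‖ := by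
    intro x hx y hy hxy
    have hclose := fun {z} hz => hGF z (mem_of_mem_nhds (hnhds z hz))
    have htriangle := dist_triangle4 (F x) (G x) (G y) (F y)
    rw [dist_comm (F x) (G x), dist_eq_norm (F x), dist_eq_norm (G x) (G y)] at htriangle
    calc (1 - 2 * C * κ) * ‖x - y‖ = ‖x - y‖ - 2 * (C * (κ ^ 2 * R)) := by rw [hxy]; ring
      _ ≤ ‖G x - G y‖ := by linarith [hF x hx y hy, hclose hx, hclose hy]
  refine ⟨fun v => ⨍ y in closedBall x₀ R, ‖fderiv ℝ G y v‖ ∂μ, ?_, fun v =>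
    ⟨le_setAverage_norm_fderiv hG hR hκ hκ'.le hlower v,
      setAverage_norm_fderiv_le hG (isCompact_closedBall x₀ R)
        (measure_closedBall_pos μ x₀ hR).ne' hfderiv v⟩⟩
  have hint : IntegrableOn (fderiv ℝ G) (closedBall x₀ R) μ :=
    (hG.continuous_fderiv one_ne_zero).continuousOn.integrableOn_compact (isCompact_closedBall x₀ R)
  simp only [setAverage_eq]
  exact (l1Cone V).smul_mem (inv_nonneg.2 measureReal_nonneg)
    (integral_norm_apply_mem_l1Cone hZ hint)

lemma exists_mem_l1Cone_of_mem_nhds [CompleteSpace Z]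
    (hZ : ∀ c : V →L[ℝ] Z, (fun v => ‖c v‖) ∈ l1Cone V) {F : V → Z} {C : ℝ≥0} {x₀ : V} {s : Set V}
    (hs : s ∈ 𝓝 x₀) (hL : LipschitzOnWith C F s)
    (hF : ∀ x ∈ s, ∀ y ∈ s, ‖x - y‖ ≤ ‖F x - F y‖) {δ : ℝ} (hδ : 0 < δ) :
    ∃ p ∈ l1Cone V, ∀ v, (1 - δ) * ‖v‖ ≤ p v ∧ p v ≤ C * ‖v‖ := by
  obtain ⟨r, hr, hrs⟩ := nhds_basis_closedBall.mem_iff.1 hs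
  have hlim : Tendsto (fun κ : ℝ => (1 - κ) ^ Module.finrank ℝ V * (1 - 2 * C * κ)) (𝓝 0) (𝓝 1) :=
    Continuous.tendsto' (by fun_prop) _ _ (by simp)
  obtain ⟨κ, hκδ, hκ, hκ'⟩ := ((hlim.mono_left nhdsWithin_le_nhds).eventually
    (eventually_gt_nhds (by linarith : 1 - δ < 1)) |>.and (Ioo_mem_nhdsGT one_pos)).exists
  obtain ⟨p, hp, hpb⟩ := exists_mem_l1Cone_of_lipschitzOnWith_closedBall (R := r / 2) hZ
    (half_pos hr) hκ hκ' (hL.mono (by rwa [mul_div_cancel₀ r two_ne_zero])) fun x hx y hy =>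
      have hsub := (closedBall_subset_closedBall (half_le_self hr.le)).trans hrs
      hF x (hsub hx) y (hsub hy)
  refine ⟨p, hp, fun v => ⟨le_trans ?_ (hpb v).1, (hpb v).2⟩⟩
  gcongr

theorem exists_linearMap_l1_of_mem_nhds [MeasurableSpace Ω] {μ : Measure Ω} {F : V → Lp ℝ 1 μ}
    {C : ℝ≥0} {x₀ : V} {s : Set V} (hs : s ∈ 𝓝 x₀) (hL : LipschitzOnWith C F s)
    (hF : ∀ x ∈ s, ∀ y ∈ s, ‖x - y‖ ≤ ‖F x - F y‖) {ε : ℝ} (hε : 0 < ε) :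
    ∃ (m : ℕ) (T : V →ₗ[ℝ] PiLp 1 (fun _ : Fin m => ℝ)),
      ∀ v, ‖v‖ ≤ ‖T v‖ ∧ ‖T v‖ ≤ (C + ε) * ‖v‖ := by
  obtain ⟨δ, hδ, hδ', hδε⟩ : ∃ δ : ℝ, 0 < δ ∧ 0 < 1 - 2 * δ ∧ C + δ = (C + ε) * (1 - 2 * δ) := by
    refine ⟨ε / (1 + 2 * (C + ε)), by positivity, ?_, ?_⟩
    · have : 0 < (1 + 2 * (C + ε) : ℝ) := by positivity
      rw [sub_pos, ← mul_div_assoc, div_lt_one this]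
      linarith [C.2]
    · field_simp
      ring
  obtain ⟨p, hp, hpb⟩ := exists_mem_l1Cone_of_mem_nhds norm_apply_L1_mem_l1Cone hs hL hF hδ
  obtain ⟨m, T, hT⟩ := exists_linearMap_of_mem_l1Cone hp hδ
  refine ⟨m, (1 - 2 * δ)⁻¹ • T, fun v => ?_⟩
  have hTv := abs_le.1 (hT v)
  rw [LinearMap.smul_apply, norm_smul_of_nonneg (inv_pos.2 hδ').le, le_inv_mul_iff₀ hδ',
    inv_mul_le_iff₀ hδ', ← mul_assoc, mul_comm _ (C + ε : ℝ), ← hδε]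
  constructor <;> nlinarith [(hpb v).1, (hpb v).2]

end Linearization

section DisjointSupports

variable {ι : Type*} [Fintype ι]

lemma norm_sum_eq_sum_norm_of_subsingleton_support {E : Type*} [SeminormedAddCommGroup E]
    {f : ι → E} (hf : (Function.support f).Subsingleton) : ‖∑ i, f i‖ = ∑ i, ‖f i‖ := by
  rcases hf.eq_empty_or_singleton with h | ⟨j, h⟩
  · simp [Function.support_eq_empty_iff.1 h]
  have hzero : ∀ i ≠ j, f i = 0 := fun i hi => Function.notMem_support.1 (by simpa [h])
  rw [Fintype.sum_eq_single j hzero,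
    Fintype.sum_eq_single j fun i hi => by rw [hzero i hi, norm_zero]]

variable {Ω E : Type*} [MeasurableSpace Ω] {μ : Measure Ω}

lemma norm_sum_L1_eq_sum_norm [NormedAddCommGroup E] {f : ι → Lp E 1 μ}
    (hf : ∀ᵐ ω ∂μ, (Function.support fun i => f i ω).Subsingleton) :
    ‖∑ i, f i‖ = ∑ i, ‖f i‖ := by
  simp only [L1.norm_eq_integral_norm]
  rw [← integral_finsetSum _ fun i _ => (L1.integrable_coeFn (f i)).norm]
  refine integral_congr_ae ?_
  filter_upwards [Lp.coeFn_fun_finsetSum univ f, hf] with ω hω hsupp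
  rw [hω, norm_sum_eq_sum_norm_of_subsingleton_support hsupp]

lemma nonempty_linearIsometry_l1_L1 {A : ι → Set Ω} (hA : ∀ i, MeasurableSet (A i))
    (h0 : ∀ i, μ (A i) ≠ 0) (htop : ∀ i, μ (A i) ≠ ⊤)
    (hdisj : Pairwise (Function.onFun Disjoint A)) :
    Nonempty (PiLp 1 (fun _ : ι => ℝ) →ₗᵢ[ℝ] Lp ℝ 1 μ) := by
  let e : ι → Lp ℝ 1 μ := fun i => indicatorConstLp 1 (hA i) (htop i) (μ.real (A i))⁻¹
  have hnorm : ∀ i, ‖e i‖ = 1 := fun i => by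
    have hpos : μ.real (A i) ≠ 0 := ENNReal.toReal_ne_zero.2 ⟨h0 i, htop i⟩
    rw [norm_indicatorConstLp one_ne_zero ENNReal.one_ne_top, norm_inv,
      Real.norm_of_nonneg measureReal_nonneg]
    simp [hpos]
  refine ⟨⟨Fintype.linearCombination ℝ e ∘ₗ (WithLp.linearEquiv 1 ℝ (ι → ℝ)).toLinearMap,
    fun a => ?_⟩⟩
  have hsupp : ∀ᵐ ω ∂μ, (Function.support fun i => (a i • e i) ω).Subsingleton := by
    have he : ∀ᵐ ω ∂μ, ∀ i, (a i • e i) ω ≠ 0 → ω ∈ A i := by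
      refine ae_all_iff.2 fun i => ?_
      filter_upwards [Lp.coeFn_smul (a i) (e i), indicatorConstLp_coeFn (p := 1) (hs := hA i)
        (hμs := htop i) (c := (μ.real (A i))⁻¹)] with ω hω hω'
      contrapose!
      intro hmem
      simp [hω, e, hω', hmem]
    filter_upwards [he] with ω hω i hi j hj
    by_contra hij
    exact Set.disjoint_left.1 (hdisj hij) (hω i hi) (hω j hj)
  calc ‖∑ i, a i • e i‖ = ∑ i, ‖a i • e i‖ := norm_sum_L1_eq_sum_norm hsupp
    _ = ‖a‖ := by simp [norm_smul, hnorm, PiLp.norm_eq_of_L1]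

lemma nonempty_linearIsometry_l1_L1Space (m : ℕ) :
    Nonempty (PiLp 1 (fun _ : Fin m => ℝ) →ₗᵢ[ℝ] L1Space) := by
  let f : ℕ → ℝ := fun n => 1 / (n + 1)
  have hf : StrictAnti f := strictAnti_nat_of_succ_lt fun n => by
    simp only [f]
    gcongr
    simp
  let A : Fin m → Set ℝ := fun i => Set.Ioo (f (i + 1)) (f i)
  have hsub : ∀ i, A i ⊆ Set.Ioo 0 1 := fun i =>
    Set.Ioo_subset_Ioo (by positivity) (by simpa [f] using hf.antitone (Nat.zero_le i))
  refine nonempty_linearIsometry_l1_L1 (A := A) (fun _ => measurableSet_Ioo) (fun i => ?_)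
    (fun _ => measure_ne_top _ _)
    (hf.antitone.pairwise_disjoint_on_Ioo_succ.comp_of_injective Fin.val_injective)
  rw [Measure.restrict_eq_self _ (hsub i), Real.volume_Ioo]
  simpa using hf (Nat.lt_succ_self i)

end DisjointSupports

section TransportationCost

variable {X}

lemma bddAbove_tcNormX {μ : X → ℝ} (hμ : μ ∈ TCmod X) :
    BddAbove {r : ℝ | ∃ f : X → ℝ, (∀ u v, |f u - f v| ≤ dist u v) ∧ r = |f ⬝ᵥ μ|} := by
  rcases isEmpty_or_nonempty X with _ | ⟨⟨x₀⟩⟩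
  · exact ⟨0, by rintro r ⟨f, -, rfl⟩; simp⟩
  refine ⟨∑ x, dist x x₀ * |μ x|, ?_⟩
  rintro r ⟨f, hf, rfl⟩
  have hμ0 : ∑ x, μ x = 0 := hμ
  have hshift : f ⬝ᵥ μ = ∑ x, (f x - f x₀) * μ x := by
    simp [dotProduct, sub_mul, ← mul_sum, hμ0]
  rw [hshift]
  refine (abs_sum_le_sum_abs _ _).trans (sum_le_sum fun x _ => ?_)
  rw [abs_mul]
  gcongr
  exact hf x x₀

lemma abs_dotProduct_le_tcNormX {μ : X → ℝ} (hμ : μ ∈ TCmod X) {f : X → ℝ}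
    (hf : LipschitzWith 1 f) : |f ⬝ᵥ μ| ≤ tcNormX X μ :=
  le_csSup (bddAbove_tcNormX hμ) ⟨f, fun u v => (hf.dist_le_mul u v).trans_eq (one_mul _), rfl⟩

lemma tcNormX_le {μ : X → ℝ} {K : ℝ} (h : ∀ f : X → ℝ, LipschitzWith 1 f → |f ⬝ᵥ μ| ≤ K) :
    tcNormX X μ ≤ K := by
  refine csSup_le ⟨_, 0, by simp, rfl⟩ ?_
  rintro r ⟨f, hf, rfl⟩
  exact h f (.mk_one hf)

lemma eq_zero_of_tcNormX_eq_zero {μ : X → ℝ} (hμ : μ ∈ TCmod X) (h : tcNormX X μ = 0) :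
    μ = 0 := by
  classical
  rcases subsingleton_or_nontrivial X with _ | _
  · ext x
    have hμ0 : ∑ y, μ y = 0 := hμ
    rwa [Fintype.sum_subsingleton _ x] at hμ0
  ext x
  have hbump : (infDist · {x}ᶜ) = Pi.single x (infDist x {x}ᶜ) := by
    ext y
    rcases eq_or_ne y x with rfl | hy
    · simp
    · rw [Pi.single_eq_of_ne hy, infDist_zero_of_mem hy]
  have hpos : 0 < infDist x {x}ᶜ :=
    ((isOpen_discrete {x}).isClosed_compl.notMem_iff_infDist_pos
      (Set.nonempty_compl_of_nontrivial x)).1 (by simp)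
  have hzero := abs_dotProduct_le_tcNormX hμ (lipschitz_infDist_pt {x}ᶜ)
  rw [h, hbump, single_dotProduct, abs_nonpos_iff] at hzero
  exact (mul_eq_zero.1 hzero).resolve_left hpos.ne'

variable (X) in
/-- The transportation cost norm as a seminorm on `TCmod X`. -/
def tcSeminorm : Seminorm ℝ (TCmod X) :=
  .ofSMulLE (fun μ => tcNormX X μ)
    (le_antisymm (tcNormX_le fun f _ => by simp) (Real.sSup_nonneg (by aesop)))
    (fun μ ν => tcNormX_le fun f hf => by
      rw [Submodule.coe_add, dotProduct_add]
      exact (abs_add_le _ _).trans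
        (add_le_add (abs_dotProduct_le_tcNormX μ.2 hf) (abs_dotProduct_le_tcNormX ν.2 hf)))
    (fun c μ => tcNormX_le fun f hf => by
      rw [Submodule.coe_smul, dotProduct_smul, smul_eq_mul, abs_mul]
      exact mul_le_mul_of_nonneg_left (abs_dotProduct_le_tcNormX μ.2 hf) (abs_nonneg c))

end TransportationCost

/-- The normed space `TC(X)`: a copy of `TCmod X` that carries the transportation cost norm instead
of the supremum norm inherited from `X → ℝ`. -/
def TCSpace : Type _ := TCmod X

namespace TCSpace

omit [MetricSpace X] in
instance : AddCommGroup (TCSpace X) := inferInstanceAs (AddCommGroup (TCmod X))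

instance : NormedAddCommGroup (TCSpace X) :=
  AddGroupNorm.toNormedAddCommGroup (E := TCSpace X)
    { (tcSeminorm X).toAddGroupSeminorm with
      eq_zero_of_map_eq_zero' := fun μ h => Subtype.ext (eq_zero_of_tcNormX_eq_zero μ.2 h) }

instance : Module ℝ (TCSpace X) := inferInstanceAs (Module ℝ (TCmod X))

instance : NormedSpace ℝ (TCSpace X) where
  norm_smul_le c μ := (map_smul_eq_mul (tcSeminorm X) c μ).le

instance : FiniteDimensional ℝ (TCSpace X) := inferInstanceAs (FiniteDimensional ℝ (TCmod X))

end TCSpace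

/-- The linear identification of `TCmod X` with the normed space `TCSpace X`. -/
def toTC : TCmod X ≃ₗ[ℝ] TCSpace X := .refl ℝ (TCmod X)

variable {X}

lemma norm_toTC_sub (μ ν : TCmod X) :
    ‖toTC X μ - toTC X ν‖ = tcNormX X ((μ : X → ℝ) - (ν : X → ℝ)) := rfl

section Distortion

variable {α Z : Type*} [SeminormedAddCommGroup Z]

/-- `F` is bi-Lipschitz with constants `1` and `C` with respect to the distance function `d`, which
need not come from a metric space instance. -/
def HasDistortionLE (d : α → α → ℝ) (F : α → Z) (C : ℝ) : Prop :=
  ∀ u v, d u v ≤ ‖F u - F v‖ ∧ ‖F u - F v‖ ≤ C * d u v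

lemma HasDistortionLE.nonneg {d : α → α → ℝ} {F : α → Z} {C : ℝ} (h : HasDistortionLE d F C)
    {u v : α} (huv : 0 < d u v) : 0 ≤ C :=
  nonneg_of_mul_nonneg_left (huv.le.trans ((h u v).1.trans (h u v).2)) huv

lemma HasDistortionLE.exists_linearMap_l1 {V Y Ω : Type*} [NormedAddCommGroup V] [NormedSpace ℝ V]
    [FiniteDimensional ℝ V] [MeasurableSpace Ω] {μ : Measure Ω} {g : Y → V} {x₀ : V}
    (hg : Set.range g ∈ 𝓝 x₀) {F : Y → Lp ℝ 1 μ} {C : ℝ} (hC : 0 ≤ C)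
    (hF : HasDistortionLE (fun u v => ‖g u - g v‖) F C) {ε : ℝ} (hε : 0 < ε) :
    ∃ (m : ℕ) (T : V →ₗ[ℝ] PiLp 1 (fun _ : Fin m => ℝ)),
      ∀ v, ‖v‖ ≤ ‖T v‖ ∧ ‖T v‖ ≤ (C + ε) * ‖v‖ := by
  lift C to ℝ≥0 using hC
  have : Nonempty Y := Set.range_nonempty_iff_nonempty.1 ⟨x₀, mem_of_mem_nhds hg⟩
  let r := Function.invFun g
  have hr : ∀ x ∈ Set.range g, g (r x) = x := fun _ hx => Function.invFun_eq hx
  have hFr : ∀ x ∈ Set.range g, ∀ y ∈ Set.range g,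
      ‖x - y‖ ≤ ‖F (r x) - F (r y)‖ ∧ ‖F (r x) - F (r y)‖ ≤ C * ‖x - y‖ := fun x hx y hy => by
    simpa only [hr x hx, hr y hy] using hF (r x) (r y)
  refine exists_linearMap_l1_of_mem_nhds (F := F ∘ r) hg (.of_dist_le_mul fun x hx y hy => ?_)
    (fun x hx y hy => (hFr x hx y hy).1) hε
  simpa only [dist_eq_norm, Function.comp_apply] using (hFr x hx y hy).2

variable (X) in
/-- The set whose infimum is `c_1(EMD(X))`. -/
def emdDistortions : Set ℝ :=
  {C | ∃ F : stdSimplex ℝ X → L1Space, HasDistortionLE (fun μ ν => tcNormX X (μ.1 - ν.1)) F C}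

variable (X) in
/-- The set whose infimum is `c_1(TC(X))`. -/
def tcDistortions : Set ℝ :=
  {C | ∃ F : TCmod X → L1Space,
    HasDistortionLE (fun μ ν : TCmod X => tcNormX X ((μ : X → ℝ) - (ν : X → ℝ))) F C}

variable (X) in
/-- The set whose infimum is `c_{1,lin}(TC(X))`. -/
def linDistortions : Set ℝ :=
  {C | ∃ (m : ℕ) (F : TCmod X →ₗ[ℝ] PiLp 1 (fun _ : Fin m => ℝ)),
    HasDistortionLE (fun μ ν : TCmod X => tcNormX X ((μ : X → ℝ) - (ν : X → ℝ))) F C}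

lemma linDistortions_subset_tcDistortions : linDistortions X ⊆ tcDistortions X := by
  rintro C ⟨m, F, hF⟩
  obtain ⟨J⟩ := nonempty_linearIsometry_l1_L1Space m
  refine ⟨J ∘ F, fun μ ν => ?_⟩
  simpa only [Function.comp_apply, ← map_sub, J.norm_map] using hF μ ν

variable [Nonempty X]

/-- The copy `μ - barycenter` of a probability measure `μ` in `TC(X)`. Subtracting the uniform
measure makes the image a neighbourhood of `0`. -/
def centered (μ : stdSimplex ℝ X) : TCmod X :=
  ⟨μ.1 - (stdSimplex.barycenter : stdSimplex ℝ X).1, by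
    change ∑ x, (μ.1 x - (stdSimplex.barycenter : stdSimplex ℝ X).1 x) = 0
    rw [sum_sub_distrib, μ.2.2, stdSimplex.barycenter.2.2, sub_self]⟩

omit [MetricSpace X] in
lemma centered_injective : Function.Injective (centered : stdSimplex ℝ X → TCmod X) :=
  fun _ _ h => Subtype.ext (sub_left_injective (congrArg Subtype.val h))

omit [MetricSpace X] in
lemma coe_centered_sub_coe_centered (μ ν : stdSimplex ℝ X) :
    (centered μ : X → ℝ) - (centered ν : X → ℝ) = μ.1 - ν.1 :=
  sub_sub_sub_cancel_right _ _ _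

lemma norm_toTC_centered_sub (μ ν : stdSimplex ℝ X) :
    ‖toTC X (centered μ) - toTC X (centered ν)‖ = tcNormX X (μ.1 - ν.1) := by
  rw [norm_toTC_sub, coe_centered_sub_coe_centered]

lemma range_toTC_centered_mem_nhds_zero : Set.range (toTC X ∘ centered) ∈ 𝓝 0 := by
  have hnonneg : ∀ᶠ v in 𝓝 (0 : TCSpace X), ∀ x,
      0 ≤ (Fintype.card X : ℝ)⁻¹ + ((toTC X).symm v : X → ℝ) x := by
    refine eventually_all.2 fun x => ?_
    have hcont : Continuous fun v => ((toTC X).symm v : X → ℝ) x :=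
      (LinearMap.proj x ∘ₗ (TCmod X).subtype ∘ₗ
        (toTC X).symm.toLinearMap).continuous_of_finiteDimensional
    have hpos : 0 < (Fintype.card X : ℝ)⁻¹ := inv_pos.2 (by exact_mod_cast Fintype.card_pos)
    exact ((hcont.const_add _).tendsto' 0 _ (by simp)).eventually (eventually_ge_nhds hpos)
  filter_upwards [hnonneg] with v hv
  have hmass : ∑ x, ((toTC X).symm v : X → ℝ) x = 0 := ((toTC X).symm v).2
  refine ⟨⟨fun x => (Fintype.card X : ℝ)⁻¹ + ((toTC X).symm v : X → ℝ) x, hv, ?_⟩, ?_⟩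
  · simp [sum_add_distrib, hmass]
  · refine (toTC X).symm.injective (Subtype.ext (funext fun x => ?_))
    simp [centered]

lemma tcDistortions_subset_emdDistortions : tcDistortions X ⊆ emdDistortions X := by
  rintro C ⟨F, hF⟩
  refine ⟨F ∘ centered, fun μ ν => ?_⟩
  simpa only [Function.comp_apply, coe_centered_sub_coe_centered] using hF (centered μ) (centered ν)

end Distortion

lemma nonneg_of_mem_emdDistortions [Nontrivial X] {C : ℝ} (hC : C ∈ emdDistortions X) : 0 ≤ C := by
  obtain ⟨F, hF⟩ := hC
  obtain ⟨μ, ν, hμν⟩ := exists_pair_ne (stdSimplex ℝ X)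
  refine hF.nonneg (u := μ) (v := ν) ?_
  rw [← norm_toTC_centered_sub, norm_sub_pos_iff]
  exact ((toTC X).injective.comp centered_injective).ne hμν

lemma add_mem_linDistortions_of_mem_emdDistortions [Nontrivial X] {C ε : ℝ}
    (hC : C ∈ emdDistortions X) (hε : 0 < ε) : C + ε ∈ linDistortions X := by
  have hC0 := nonneg_of_mem_emdDistortions hC
  obtain ⟨F, hF⟩ := hC
  simp only [← norm_toTC_centered_sub] at hF
  obtain ⟨m, T, hT⟩ := hF.exists_linearMap_l1 range_toTC_centered_mem_nhds_zero hC0 hε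
  refine ⟨m, T ∘ₗ (toTC X).toLinearMap, fun μ ν => ?_⟩
  simpa only [← norm_toTC_sub, ← map_sub, LinearMap.comp_apply, LinearEquiv.coe_coe]
    using hT (toTC X (μ - ν))

lemma csInf_eq_csInf_of_forall_add_mem {s t : Set ℝ} (hs : BddBelow s) (hts : t ⊆ s)
    (h : ∀ C ∈ s, ∀ ε > 0, C + ε ∈ t) : sInf s = sInf t := by
  rcases s.eq_empty_or_nonempty with rfl | hne
  · rw [Set.subset_empty_iff.1 hts]
  have htne : t.Nonempty := hne.elim fun C hC => ⟨C + 1, h C hC 1 one_pos⟩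
  exact (csInf_le_csInf hs htne hts).antisymm <| le_csInf hne fun C hC =>
    le_of_forall_pos_le_add fun ε hε => csInf_le (hs.mono hts) (h C hC ε hε)

variable (X)

/-- For every finite metric space `X` with at least two points,
`c_1(EMD(X)) = c_1(TC(X)) = c_{1,lin}(TC(X))`. -/
theorem c1_emd_eq_c1_tc_eq_c1_lin [Nontrivial X] :
    c1EMD X = c1TC X ∧ c1TC X = c1lin X := by
  have hlin : linDistortions X ⊆ tcDistortions X := linDistortions_subset_tcDistortions
  have htc : tcDistortions X ⊆ emdDistortions X := tcDistortions_subset_emdDistortions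
  have hadd : ∀ C ∈ emdDistortions X, ∀ ε > 0, C + ε ∈ linDistortions X :=
    fun _ hC _ hε => add_mem_linDistortions_of_mem_emdDistortions hC hε
  have hbdd : BddBelow (emdDistortions X) := ⟨0, fun _ hC => nonneg_of_mem_emdDistortions hC⟩
  exact ⟨csInf_eq_csInf_of_forall_add_mem hbdd htc fun C hC ε hε => hlin (hadd C hC ε hε),
    csInf_eq_csInf_of_forall_add_mem (hbdd.mono htc) hlin fun C hC ε hε => hadd C (htc hC) ε hε⟩
end
end
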